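/- arXiv:2002.09363 — 7 statements merged into one kernel-verified Lean document; each statement's English description precedes it below -/
import Mathlib

section
/- Quartic characterization of the good set on the binary tree (Proposition 4.1): Let d = 2. For every pair (γ, δ) ∈ (1,∞) × (0,∞), one has (γ, δ) ∈ G_2 if and only if 16γ²δ⁴ + 24γ³δ² + (16γ⁵ − 4γ²)δ − 3γ⁴ < 0. -/
open scoped BigOperators

noncomputable section

/-- The good set `G_d ⊆ (1,∞) × (0,∞)`. -/
def goodSet (d : ℕ) : Set (ℝ × ℝ) :=
  {gd | 1 < gd.1 ∧ 0 < gd.2 ∧ ∃ ε > 0,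
    gd.2 + gd.1 * ε ^ d ≤ ε ∧
    2 * d * gd.1 * ε ^ (d - 1) + 2 * d * gd.2 * ε ^ d < 1}

/-!
Membership asks for `ε > 0` with `f(ε) ≤ 0` and `g(ε) < 0`, where `f(ε) = γε² - ε + δ` and
`g(ε) = 4δε² + 4γε - 1`. Subtracting `4δf` from `γg` leaves a linear polynomial; let `t > 0` be its
root, so that `γ g(t) = 4δ f(t)`. If some `ε` is admissible, then `f(t) < 0`: for `t ≤ ε` because
`g` increases on `[0,∞)`, and for `ε < t` because `f` decreases up to its vertex `1/(2γ)`, which `t`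
does not exceed. Conversely, if `f(t) < 0`, then `t` itself is admissible. The quartic is `f(t)`
with denominators cleared.
-/

/-- The amount by which `ε ↦ δ + γ ε ^ 2` exceeds the identity: the first condition defining `G_2`
says that it is nonpositive. -/
def fixedPointDefect (γ δ ε : ℝ) : ℝ := γ * ε ^ 2 - ε + δ

/-- The amount by which the contraction bound `4 γ ε + 4 δ ε ^ 2` exceeds `1`: the second condition
defining `G_2` says that it is negative. -/
def contractionDefect (γ δ ε : ℝ) : ℝ := 4 * δ * ε ^ 2 + 4 * γ * ε - 1

/-- The root `t` of the linear polynomial `γ g - 4 δ f` in `ε`, where `f` is `fixedPointDefect` and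
`g` is `contractionDefect`; it serves as a test point for membership in `G_2`. The denominator is
nonzero in the range of interest `0 < γ`, `0 ≤ δ`. -/
def remainderRoot (γ δ : ℝ) : ℝ := (γ + 4 * δ ^ 2) / (4 * (γ ^ 2 + δ))

section

variable {γ δ : ℝ}

lemma remainderRoot_pos (hγ : 0 < γ) (hδ : 0 ≤ δ) : 0 < remainderRoot γ δ := by
  unfold remainderRoot
  positivity

lemma mul_contractionDefect_remainderRoot (h : γ ^ 2 + δ ≠ 0) :
    γ * contractionDefect γ δ (remainderRoot γ δ) =
      4 * δ * fixedPointDefect γ δ (remainderRoot γ δ) := by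
  have root : 4 * (γ ^ 2 + δ) * remainderRoot γ δ = γ + 4 * δ ^ 2 :=
    mul_div_cancel₀ _ (mul_ne_zero four_ne_zero h)
  unfold contractionDefect fixedPointDefect
  linear_combination root

lemma quartic_eq_mul_fixedPointDefect_remainderRoot (h : γ ^ 2 + δ ≠ 0) :
    16 * γ ^ 2 * δ ^ 4 + 24 * γ ^ 3 * δ ^ 2 + (16 * γ ^ 5 - 4 * γ ^ 2) * δ - 3 * γ ^ 4 =
      16 * γ * (γ ^ 2 + δ) ^ 2 * fixedPointDefect γ δ (remainderRoot γ δ) := by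
  unfold fixedPointDefect remainderRoot
  field_simp
  ring

lemma strictAntiOn_fixedPointDefect (hγ : 0 < γ) :
    StrictAntiOn (fixedPointDefect γ δ) (Set.Iic (1 / (2 * γ))) := by
  intro a _ b hb hab
  have left_of_vertex : γ * (a + b) < 1 := by
    have hb' : b * (2 * γ) ≤ 1 := (le_div_iff₀ (by positivity)).1 hb
    linarith [mul_lt_mul_of_pos_left hab hγ]
  have factored : fixedPointDefect γ δ b - fixedPointDefect γ δ a =
      (b - a) * (γ * (a + b) - 1) := by
    unfold fixedPointDefect
    ring
  rw [← sub_neg, factored]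
  exact mul_neg_of_pos_of_neg (sub_pos.2 hab) (sub_neg.2 left_of_vertex)

lemma monotoneOn_contractionDefect (hγ : 0 ≤ γ) (hδ : 0 ≤ δ) :
    MonotoneOn (contractionDefect γ δ) (Set.Ici 0) := by
  intro a (ha : 0 ≤ a) b _ hab
  unfold contractionDefect
  gcongr

lemma four_mul_mul_le_one_of_fixedPointDefect_nonpos {ε : ℝ} (hγ : 0 ≤ γ)
    (h : fixedPointDefect γ δ ε ≤ 0) : 4 * γ * δ ≤ 1 := by
  have completed_square :
      4 * γ * fixedPointDefect γ δ ε = (2 * γ * ε - 1) ^ 2 + (4 * γ * δ - 1) := by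
    unfold fixedPointDefect
    ring
  have : 4 * γ * fixedPointDefect γ δ ε ≤ 0 := mul_nonpos_of_nonneg_of_nonpos (by positivity) h
  linarith [sq_nonneg (2 * γ * ε - 1)]

lemma remainderRoot_le_vertex (hγ : 0 < γ) (hδ : 0 ≤ δ) (h : 4 * γ * δ ≤ 1) :
    remainderRoot γ δ ≤ 1 / (2 * γ) := by
  unfold remainderRoot
  rw [div_le_div_iff₀ (by positivity) (by positivity)]
  have : 4 * γ * δ * δ ≤ 1 * δ := by gcongr
  linarith [sq_nonneg γ]

lemma fixedPointDefect_remainderRoot_neg {ε : ℝ} (hγ : 0 < γ) (hδ : 0 ≤ δ)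
    (hf : fixedPointDefect γ δ ε ≤ 0) (hg : contractionDefect γ δ ε < 0) :
    fixedPointDefect γ δ (remainderRoot γ δ) < 0 := by
  rcases le_or_gt (remainderRoot γ δ) ε with hle | hlt
  · have ht : 0 ≤ remainderRoot γ δ := (remainderRoot_pos hγ hδ).le
    have hgt : contractionDefect γ δ (remainderRoot γ δ) < 0 :=
      (monotoneOn_contractionDefect hγ.le hδ ht (ht.trans hle) hle).trans_lt hg
    have hprod : 4 * δ * fixedPointDefect γ δ (remainderRoot γ δ) < 0 := by
      rw [← mul_contractionDefect_remainderRoot (by positivity)]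
      exact mul_neg_of_pos_of_neg hγ hgt
    exact neg_of_mul_neg_right hprod (by positivity)
  · have hvertex : remainderRoot γ δ ≤ 1 / (2 * γ) :=
      remainderRoot_le_vertex hγ hδ (four_mul_mul_le_one_of_fixedPointDefect_nonpos hγ.le hf)
    exact (strictAntiOn_fixedPointDefect hγ (hlt.le.trans hvertex) hvertex hlt).trans_le hf

lemma contractionDefect_remainderRoot_neg (hγ : 0 < γ) (hδ : 0 < δ)
    (hf : fixedPointDefect γ δ (remainderRoot γ δ) < 0) :
    contractionDefect γ δ (remainderRoot γ δ) < 0 := by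
  have hprod : γ * contractionDefect γ δ (remainderRoot γ δ) < 0 := by
    rw [mul_contractionDefect_remainderRoot (by positivity)]
    exact mul_neg_of_pos_of_neg (by positivity) hf
  exact neg_of_mul_neg_right hprod hγ.le

lemma exists_fixedPointDefect_nonpos_and_contractionDefect_neg_iff (hγ : 0 < γ) (hδ : 0 < δ) :
    (∃ ε > 0, fixedPointDefect γ δ ε ≤ 0 ∧ contractionDefect γ δ ε < 0) ↔
      fixedPointDefect γ δ (remainderRoot γ δ) < 0 :=
  ⟨fun ⟨_, _, hf, hg⟩ => fixedPointDefect_remainderRoot_neg hγ hδ.le hf hg,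
    fun hf => ⟨remainderRoot γ δ, remainderRoot_pos hγ hδ.le, hf.le,
      contractionDefect_remainderRoot_neg hγ hδ hf⟩⟩

theorem stmt8_general (hγ : 0 < γ) (hδ : 0 < δ) :
    (∃ ε > 0, δ + γ * ε ^ 2 ≤ ε ∧ 4 * γ * ε + 4 * δ * ε ^ 2 < 1) ↔
      16 * γ ^ 2 * δ ^ 4 + 24 * γ ^ 3 * δ ^ 2 + (16 * γ ^ 5 - 4 * γ ^ 2) * δ
        - 3 * γ ^ 4 < 0 := by
  have first_iff (ε : ℝ) : δ + γ * ε ^ 2 ≤ ε ↔ fixedPointDefect γ δ ε ≤ 0 := by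
    unfold fixedPointDefect
    constructor <;> intro h <;> linarith
  have second_iff (ε : ℝ) : 4 * γ * ε + 4 * δ * ε ^ 2 < 1 ↔ contractionDefect γ δ ε < 0 := by
    unfold contractionDefect
    constructor <;> intro h <;> linarith
  have hfactor : 0 < 16 * γ * (γ ^ 2 + δ) ^ 2 := by positivity
  simp only [first_iff, second_iff]
  rw [exists_fixedPointDefect_nonpos_and_contractionDefect_neg_iff hγ hδ,
    quartic_eq_mul_fixedPointDefect_remainderRoot (by positivity)]
  exact ⟨mul_neg_of_pos_of_neg hfactor, fun h => neg_of_mul_neg_right h hfactor.le⟩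

end

/-- Proposition 4.1: quartic characterization of the good set on the
binary tree. For `(γ, δ) ∈ (1,∞) × (0,∞)`, `(γ, δ) ∈ G_2` iff
`16γ²δ⁴ + 24γ³δ² + (16γ⁵ − 4γ²)δ − 3γ⁴ < 0`. -/
theorem stmt8 (γ δ : ℝ) (hγ : 1 < γ) (hδ : 0 < δ) :
    (γ, δ) ∈ goodSet 2 ↔
      16 * γ ^ 2 * δ ^ 4 + 24 * γ ^ 3 * δ ^ 2 + (16 * γ ^ 5 - 4 * γ ^ 2) * δ
        - 3 * γ ^ 4 < 0 := by
  rw [← stmt8_general (zero_lt_one.trans hγ) hδ]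
  norm_num [goodSet, hγ, hδ]
end
end

section
/- The boundary curve of the good set G_2 (Proposition 4.1 with its Remark): For every γ > 1, the quartic polynomial p_γ(δ) := 16γ²δ⁴ + 24γ³δ² + (16γ⁵ − 4γ²)δ − 3γ⁴ has exactly one positive real root δ(γ), this root satisfies 0 < δ(γ) ≤ 1/(4γ), and for every δ > 0 one has (γ, δ) ∈ G_2 if and only if δ < δ(γ). In other words, G_2 is exactly the region strictly below the graph of the function γ ↦ δ(γ) on (1,∞). -/
/-! If `4γδ > 1`, no `ε` satisfies `δ + γε² ≤ ε`, and `p_γ(δ) > 0`. Otherwise let `x ≤ y` be the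
roots of `γε² - ε + δ` and put `g(ε) = 4γε + 4δε² - 1`. The resultant of the two quadratics gives
`p_γ(δ) = γ⁴ g(x) g(y)`, and `g(y) > 0` because `y ≥ 1/(2γ)`; so `p_γ(δ)` has the sign of `g(x)`.
As `g` increases on `(0,∞)`, an admissible `ε ∈ [x, y]` with `g(ε) < 0` exists iff `g(x) < 0`.
Hence the good `δ` are those with `p_γ(δ) < 0`, and these lie below a single root because
`δ ↦ p_γ(δ)/δ` is strictly increasing on `(0,∞)`. -/

open scoped BigOperators

noncomputable section

/-- The radii `ε` that witness membership of `(γ, δ)` in the good set `G_d`. The constraints `1 < γ`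
and `0 < δ` of `goodSet` are not part of the definition. -/
def goodRadii (d : ℕ) (γ δ : ℝ) : Set ℝ :=
  {ε | 0 < ε ∧ δ + γ * ε ^ d ≤ ε ∧ 2 * d * γ * ε ^ (d - 1) + 2 * d * δ * ε ^ d < 1}

/-- The quartic `p_γ(δ)` whose positive root `δ(γ)` traces the boundary curve of `G_2`. -/
def boundaryQuartic (γ δ : ℝ) : ℝ :=
  16 * γ ^ 2 * δ ^ 4 + 24 * γ ^ 3 * δ ^ 2 + (16 * γ ^ 5 - 4 * γ ^ 2) * δ - 3 * γ ^ 4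

lemma exists_le_add_eq_mul_eq {s p : ℝ} (h : 4 * p ≤ s ^ 2) :
    ∃ x y : ℝ, x ≤ y ∧ x + y = s ∧ x * y = p := by
  have hsq : √(s ^ 2 - 4 * p) ^ 2 = s ^ 2 - 4 * p := Real.sq_sqrt (sub_nonneg.2 h)
  refine ⟨(s - √(s ^ 2 - 4 * p)) / 2, (s + √(s ^ 2 - 4 * p)) / 2, ?_, by ring, ?_⟩
  · linarith [Real.sqrt_nonneg (s ^ 2 - 4 * p)]
  · linear_combination -hsq / 4

section

variable {γ δ : ℝ}

lemma mem_goodSet_iff_goodRadii_nonempty {d : ℕ} :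
    (γ, δ) ∈ goodSet d ↔ 1 < γ ∧ 0 < δ ∧ (goodRadii d γ δ).Nonempty :=
  Iff.rfl

lemma mem_goodRadii_two {ε : ℝ} :
    ε ∈ goodRadii 2 γ δ ↔ 0 < ε ∧ δ + γ * ε ^ 2 ≤ ε ∧ 4 * γ * ε + 4 * δ * ε ^ 2 < 1 := by
  norm_num [goodRadii]

lemma strictMonoOn_boundaryQuartic_div (hγ : 0 < γ) :
    StrictMonoOn (fun δ ↦ boundaryQuartic γ δ / δ) (Set.Ioi 0) := by
  have hdiv {δ : ℝ} (hδ : 0 < δ) : boundaryQuartic γ δ / δ =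
      16 * γ ^ 2 * δ ^ 3 + 24 * γ ^ 3 * δ + (16 * γ ^ 5 - 4 * γ ^ 2) - 3 * γ ^ 4 / δ := by
    unfold boundaryQuartic
    field_simp
  intro a (ha : 0 < a) b (hb : 0 < b) hab
  simp only [hdiv ha, hdiv hb]
  gcongr

lemma boundaryQuartic_neg_iff_lt {δ₀ : ℝ} (hγ : 0 < γ) (hδ₀ : 0 < δ₀)
    (hroot : boundaryQuartic γ δ₀ = 0) (hδ : 0 < δ) : boundaryQuartic γ δ < 0 ↔ δ < δ₀ := by
  rw [← (strictMonoOn_boundaryQuartic_div hγ).lt_iff_lt hδ hδ₀, hroot, zero_div,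
    div_lt_iff₀ hδ, zero_mul]

lemma eq_of_boundaryQuartic_eq_zero {δ₀ : ℝ} (hγ : 0 < γ) (hδ₀ : 0 < δ₀)
    (hroot₀ : boundaryQuartic γ δ₀ = 0) (hδ : 0 < δ) (hroot : boundaryQuartic γ δ = 0) :
    δ = δ₀ :=
  (strictMonoOn_boundaryQuartic_div hγ).injOn hδ hδ₀ (by simp only [hroot, hroot₀, zero_div])

lemma boundaryQuartic_pos (hγ : 0 < γ) (h : 1 ≤ 4 * γ * δ) : 0 < boundaryQuartic γ δ := by
  have hδ : 0 < δ := pos_of_mul_pos_right (zero_lt_one.trans_le h) (by positivity)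
  calc
    0 < 16 * γ ^ 2 * δ ^ 4 + 2 * γ ^ 2 * δ + γ ^ 4
        + (4 * γ * δ - 1) * (6 * γ ^ 2 * δ + 4 * γ ^ 4) :=
      add_pos_of_pos_of_nonneg (by positivity) (mul_nonneg (sub_nonneg.2 h) (by positivity))
    _ = boundaryQuartic γ δ := by unfold boundaryQuartic; ring

lemma exists_boundaryQuartic_eq_zero (hγ : 0 < γ) :
    ∃ δ₀, 0 < δ₀ ∧ δ₀ ≤ 1 / (4 * γ) ∧ boundaryQuartic γ δ₀ = 0 := by
  have hcont : ContinuousOn (boundaryQuartic γ) (Set.Icc 0 (1 / (4 * γ))) := by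
    unfold boundaryQuartic
    fun_prop
  have hleft : boundaryQuartic γ 0 < 0 := by
    have : 0 < γ ^ 4 := by positivity
    unfold boundaryQuartic
    linarith
  have hright : 0 < boundaryQuartic γ (1 / (4 * γ)) :=
    boundaryQuartic_pos hγ (mul_one_div_cancel (by positivity)).ge
  obtain ⟨δ₀, ⟨hpos, hle⟩, hroot⟩ :=
    intermediate_value_Ioc (by positivity) hcont ⟨hleft, hright.le⟩
  exact ⟨δ₀, hpos, hle, hroot⟩

lemma four_mul_mul_le_one_of_add_mul_sq_le {ε : ℝ} (hγ : 0 ≤ γ) (h : δ + γ * ε ^ 2 ≤ ε) :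
    4 * γ * δ ≤ 1 := by
  have hmul : 4 * γ * (δ + γ * ε ^ 2) ≤ 4 * γ * ε := by gcongr
  linarith [sq_nonneg (2 * γ * ε - 1)]

section Roots

variable {x y : ℝ}

lemma boundaryQuartic_eq_mul (hsum : γ * (x + y) = 1) (hprod : γ * (x * y) = δ) :
    boundaryQuartic γ δ =
      γ ^ 4 * (4 * γ * y + 4 * δ * y ^ 2 - 1) * (4 * γ * x + 4 * δ * x ^ 2 - 1) := by
  symm
  calc
    _ = 16 * γ ^ 2 * δ ^ 2 * (γ * (x * y)) ^ 2 + 16 * γ ^ 3 * δ * (γ * (x * y)) * (γ * (x + y))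
        + 8 * γ ^ 3 * δ * (γ * (x * y)) + 16 * γ ^ 5 * (γ * (x * y))
        - 4 * γ ^ 2 * δ * (γ * (x + y)) ^ 2 - 4 * γ ^ 4 * (γ * (x + y)) + γ ^ 4 := by ring
    _ = boundaryQuartic γ δ := by
      rw [hsum, hprod]
      unfold boundaryQuartic
      ring

lemma boundaryQuartic_neg_iff_of_roots (hγ : 0 < γ) (hδ : 0 ≤ δ) (hxy : x ≤ y)
    (hsum : γ * (x + y) = 1) (hprod : γ * (x * y) = δ) :
    boundaryQuartic γ δ < 0 ↔ 4 * γ * x + 4 * δ * x ^ 2 < 1 := by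
  have hy : 0 < 4 * γ * y + 4 * δ * y ^ 2 - 1 := by
    have hmul : γ * x ≤ γ * y := by gcongr
    have hsq : 0 ≤ 4 * δ * y ^ 2 := by positivity
    linarith
  rw [boundaryQuartic_eq_mul hsum hprod]
  exact (smul_neg_iff_of_pos_left (mul_pos (pow_pos hγ 4) hy)).trans sub_neg

lemma goodRadii_two_nonempty_iff_of_roots (hγ : 0 < γ) (hδ : 0 < δ) (hxy : x ≤ y)
    (hsum : γ * (x + y) = 1) (hprod : γ * (x * y) = δ) :
    (goodRadii 2 γ δ).Nonempty ↔ 4 * γ * x + 4 * δ * x ^ 2 < 1 := by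
  have hfactor (ε : ℝ) : δ + γ * ε ^ 2 - ε = γ * ((ε - x) * (ε - y)) := by
    linear_combination ε * hsum - hprod
  have hx : 0 < x := by
    have hsum_pos : 0 < x + y := pos_of_mul_pos_right (hsum ▸ one_pos) hγ.le
    have hprod_pos : 0 < x * y := pos_of_mul_pos_right (hprod ▸ hδ) hγ.le
    exact pos_of_mul_pos_left hprod_pos (by linarith)
  constructor
  · rintro ⟨ε, hε⟩
    obtain ⟨-, hle, hlt⟩ := mem_goodRadii_two.1 hε
    have hxε : x ≤ ε := by
      by_contra! hεx
      have hpos : 0 < γ * ((ε - x) * (ε - y)) :=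
        mul_pos hγ (mul_pos_of_neg_of_neg (by linarith) (by linarith))
      linarith [hfactor ε]
    exact lt_of_le_of_lt (by gcongr) hlt
  · intro hlt
    have hroot : δ + γ * x ^ 2 - x = 0 := by rw [hfactor, sub_self, zero_mul, mul_zero]
    exact ⟨x, mem_goodRadii_two.2 ⟨hx, (sub_eq_zero.1 hroot).le, hlt⟩⟩

end Roots

lemma goodRadii_two_nonempty_iff_boundaryQuartic_neg (hγ : 0 < γ) (hδ : 0 < δ) :
    (goodRadii 2 γ δ).Nonempty ↔ boundaryQuartic γ δ < 0 := by
  rcases le_or_gt (4 * γ * δ) 1 with hle | hgt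
  · have hdisc : 4 * (δ / γ) ≤ (1 / γ) ^ 2 := by
      field_simp
      linarith
    obtain ⟨x, y, hxy, hadd, hmul⟩ := exists_le_add_eq_mul_eq hdisc
    have hsum : γ * (x + y) = 1 := by rw [hadd, mul_one_div_cancel hγ.ne']
    have hprod : γ * (x * y) = δ := by rw [hmul, mul_div_cancel₀ δ hγ.ne']
    rw [goodRadii_two_nonempty_iff_of_roots hγ hδ hxy hsum hprod,
      boundaryQuartic_neg_iff_of_roots hγ hδ.le hxy hsum hprod]
  · refine iff_of_false ?_ (boundaryQuartic_pos hγ hgt.le).not_gt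
    rintro ⟨ε, hε⟩
    exact hgt.not_ge (four_mul_mul_le_one_of_add_mul_sq_le hγ.le (mem_goodRadii_two.1 hε).2.1)

end

theorem stmt9_general (γ : ℝ) (hγ : 0 < γ) :
    ∃ δ₀ : ℝ, 0 < δ₀ ∧
      boundaryQuartic γ δ₀ = 0 ∧
      (∀ δ' : ℝ, 0 < δ' → boundaryQuartic γ δ' = 0 → δ' = δ₀) ∧
      δ₀ ≤ 1 / (4 * γ) ∧
      ∀ δ : ℝ, 0 < δ → ((goodRadii 2 γ δ).Nonempty ↔ δ < δ₀) := by
  obtain ⟨δ₀, hpos, hle, hroot⟩ := exists_boundaryQuartic_eq_zero hγ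
  refine ⟨δ₀, hpos, hroot, fun δ' ↦ eq_of_boundaryQuartic_eq_zero hγ hpos hroot, hle,
    fun δ hδ ↦ ?_⟩
  rw [goodRadii_two_nonempty_iff_boundaryQuartic_neg hγ hδ,
    boundaryQuartic_neg_iff_lt hγ hpos hroot hδ]

/-- Proposition 4.1 with its Remark: the boundary curve of `G_2`.
For every `γ > 1` the quartic `p_γ(δ)` has exactly one positive root `δ(γ)`, it satisfies
`0 < δ(γ) ≤ 1/(4γ)`, and for `δ > 0` one has `(γ, δ) ∈ G_2 ↔ δ < δ(γ)`. -/
theorem stmt9 (γ : ℝ) (hγ : 1 < γ) :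
    ∃ δ0 : ℝ, 0 < δ0 ∧
      16 * γ ^ 2 * δ0 ^ 4 + 24 * γ ^ 3 * δ0 ^ 2 + (16 * γ ^ 5 - 4 * γ ^ 2) * δ0
        - 3 * γ ^ 4 = 0 ∧
      (∀ δ' : ℝ, 0 < δ' →
        16 * γ ^ 2 * δ' ^ 4 + 24 * γ ^ 3 * δ' ^ 2 + (16 * γ ^ 5 - 4 * γ ^ 2) * δ'
          - 3 * γ ^ 4 = 0 → δ' = δ0) ∧
      δ0 ≤ 1 / (4 * γ) ∧
      ∀ δ : ℝ, 0 < δ → ((γ, δ) ∈ goodSet 2 ↔ δ < δ0) := by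
  simpa +contextual only [mem_goodSet_iff_goodRadii_nonempty, hγ, true_and, boundaryQuartic] using
    stmt9_general γ (zero_lt_one.trans hγ)
end
end

section
/- Existence of non-constant q-periodic boundary law solutions for every period (Theorem 3.1, part 1): Fix an integer d ≥ 2 and let Q : ℤ → (0,∞) be even with Q(0) = 1 and Σ_{j∈ℤ} Q(j) < ∞. If (‖Q‖_{1,ℤ}, ‖Q‖_{1,ℤ∖{0}}) ∈ G_d, then for every integer q ≥ 2 there exists λ : ℤ/qℤ → (0,∞) with λ(0̄) = 1 and λ(ī) < 1 for all ī ≠ 0̄ (in particular λ is not constant, i.e. not the free state) such that λ(ī) = (Σ_{j̄∈ℤ/qℤ} Q_q(ī − j̄) λ(j̄) / Σ_{j̄∈ℤ/qℤ} Q_q(j̄) λ(j̄))^d for every ī ∈ ℤ/qℤ. -/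
/-!
Substitute `λ = x ^ d` and normalise `x 0 = 1`. Writing `u` for the restriction of `x` to the
complement of the origin, the boundary law equation with matrix `a (i - j)` off the origin says that
`u` is a fixed point of `u ↦ (c + β (u ^ d))⁻¹ • (b + K (u ^ d))` on `ℓ¹`, where `c = a 0 ≥ 1`, `b`
and `β` are the column and the row of the matrix through the origin, and `K` is the remaining block.
On nonnegative `u` the denominator is at least `1`, while `‖K‖ ≤ ‖a‖₁`, and `‖b‖` and `‖β‖` are at
most the `ℓ¹`-norm of `a` off the origin. Hence the first inequality of the good set makes the
nonnegative part of the ball of radius `ε` invariant and the second makes the map a contraction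
there, so Banach's fixed point theorem applies. At the origin, evenness of `a` makes numerator and
denominator equal, which is consistent with `x 0 = 1`. The contraction inequality also forces
`ε < 1`, whence `x < 1` off the origin. Summing `Q` over the classes modulo `q` preserves the total
mass and does not increase the mass off the origin, so the hypotheses pass from `Q` to the fuzzy
operator `a`.
-/

open scoped BigOperators
open Filter Topology

noncomputable section

/-- The fuzzy transfer operator `Q_q(ī) = Σ_{j ≡ i mod q} Q(j)`. -/
noncomputable def Qfuzzy (q : ℕ) (Q : ℤ → ℝ) (i : ZMod q) : ℝ :=
  ∑' j : {j : ℤ // (j : ZMod q) = i}, Q j.1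

/-- The `p`-norm `‖x‖_{p,ℤ}`. -/
noncomputable def normZ (p : ℝ) (x : ℤ → ℝ) : ℝ :=
  (∑' j : ℤ, |x j| ^ p) ^ (1 / p)

/-- The `p`-norm `‖x‖_{p,ℤ∖{0}}`. -/
noncomputable def normZ0 (p : ℝ) (x : ℤ → ℝ) : ℝ :=
  (∑' j : {j : ℤ // j ≠ 0}, |x j.1| ^ p) ^ (1 / p)

/-- The `p`-norm `‖x‖_{p,ℤ/qℤ}`. -/
noncomputable def normM (q : ℕ) (p : ℝ) (x : ZMod q → ℝ) : ℝ :=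
  (∑' i : ZMod q, |x i| ^ p) ^ (1 / p)

/-- The `p`-norm `‖x‖_{p,ℤ/qℤ∖{0̄}}`. -/
noncomputable def normM0 (q : ℕ) (p : ℝ) (x : ZMod q → ℝ) : ℝ :=
  (∑' i : {i : ZMod q // i ≠ 0}, |x i.1| ^ p) ^ (1 / p)

open scoped lp

section BanachFixedPoint

lemma exists_fixedPoint_of_dist_le_mul {X : Type*} [MetricSpace X] [CompleteSpace X] {S : Set X}
    (hS : IsClosed S) (hne : S.Nonempty) {f : X → X} (hf : Set.MapsTo f S S) {c : ℝ} (hc : c < 1)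
    (hdist : ∀ x ∈ S, ∀ y ∈ S, dist (f x) (f y) ≤ c * dist x y) :
    ∃ x ∈ S, f x = x := by
  obtain ⟨x₀, hx₀⟩ := hne
  have hcontr : ContractingWith c.toNNReal (hf.restrict f S S) :=
    ⟨Real.toNNReal_lt_one.2 hc, LipschitzWith.of_dist_le_mul fun x y =>
      (hdist x x.2 y y.2).trans <|
        mul_le_mul_of_nonneg_right (Real.le_coe_toNNReal c) dist_nonneg⟩
  obtain ⟨x, hx, hfix, -⟩ :=
    hcontr.exists_fixedPoint' hS.isComplete hf hx₀ (edist_ne_top _ _)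
  exact ⟨x, hx, hfix⟩

lemma norm_inv_smul_sub_inv_smul_le {E : Type*} [NormedAddCommGroup E] [NormedSpace ℝ E]
    {s t : ℝ} (hs : 1 ≤ s) (ht : t ≠ 0) (v w : E) :
    ‖s⁻¹ • v - t⁻¹ • w‖ ≤ ‖v - w‖ + |s - t| * ‖t⁻¹ • w‖ := by
  have hs₀ : s ≠ 0 := by positivity
  have hsplit : s⁻¹ • v - t⁻¹ • w = s⁻¹ • ((v - w) - (s - t) • t⁻¹ • w) := by
    match_scalars <;> field_simp
    ring
  calc ‖s⁻¹ • v - t⁻¹ • w‖ = |s⁻¹| * ‖(v - w) - (s - t) • t⁻¹ • w‖ := by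
        rw [hsplit, norm_smul, Real.norm_eq_abs]
    _ ≤ ‖(v - w) - (s - t) • t⁻¹ • w‖ :=
        mul_le_of_le_one_left (norm_nonneg _) <| by
          rw [abs_of_pos (by positivity)]
          exact inv_le_one_of_one_le₀ hs
    _ ≤ ‖v - w‖ + |s - t| * ‖t⁻¹ • w‖ := by
        refine (norm_sub_le _ _).trans_eq ?_
        rw [norm_smul (s - t), Real.norm_eq_abs]

end BanachFixedPoint

section EllOne

variable {ι : Type*}

lemma norm_ellOne_eq_tsum {E : Type*} [NormedAddCommGroup E] (u : ℓ¹(ι, E)) :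
    ‖u‖ = ∑' i, ‖u i‖ := by
  simpa using lp.norm_eq_tsum_rpow (p := 1) (by simp) u

lemma memℓp_one_of_summable {f : ι → ℝ} (hf : Summable f) : Memℓp f 1 :=
  memℓp_gen <| by simpa using hf.abs

lemma norm_le_mul_norm_of_forall_abs_le {u v : ℓ¹(ι, ℝ)} {C : ℝ}
    (h : ∀ i, |u i| ≤ C * |v i|) (hC : 0 ≤ C) : ‖u‖ ≤ C * ‖v‖ := by
  calc ‖u‖ ≤ ‖C • v‖ := lp.norm_mono one_ne_zero fun i => by
        simpa [abs_mul, abs_of_nonneg hC] using h i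
    _ = C * ‖v‖ := by rw [norm_smul, Real.norm_of_nonneg hC]

section Lift

variable {E : Type*} [NormedAddCommGroup E] [NormedSpace ℝ E] [CompleteSpace E]
  {w : ι → E} {C : ℝ} (hC : 0 ≤ C) (hw : ∀ i, ‖w i‖ ≤ C)

/-- The continuous linear map `u ↦ ∑ i, u i • w i` on `ℓ¹` attached to a bounded family `w`. For
`E = ℓ¹(κ, ℝ)` it is the operator whose matrix has the columns `w i`. -/
def ellOneLift : ℓ¹(ι, ℝ) →L[ℝ] E :=
  lp.tsumCLM ℝ ι E ∘L
    lp.mapCLM 1 (fun i => ContinuousLinearMap.toSpanSingleton ℝ (w i)) hC (by simpa using hw)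

lemma hasSum_ellOneLift (u : ℓ¹(ι, ℝ)) :
    HasSum (fun i => u i • w i) (ellOneLift hC hw u) :=
  (lp.memℓp <| lp.mapCLM 1 (fun i => ContinuousLinearMap.toSpanSingleton ℝ (w i)) hC
    (by simpa using hw) u).summable_of_one.hasSum

lemma norm_ellOneLift_le : ‖ellOneLift hC hw‖ ≤ C := by
  refine (ContinuousLinearMap.opNorm_comp_le _ _).trans ?_
  simpa using mul_le_mul lp.norm_tsumCLM_le (lp.norm_mapCLM_le 1 _ hC _) (norm_nonneg _)
    zero_le_one

end Lift

section Pow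

variable (d : ℕ) [NeZero d]

lemma abs_pow_apply_le (u : ℓ¹(ι, ℝ)) (i : ι) : |u i ^ d| ≤ ‖u‖ ^ (d - 1) * |u i| := by
  rw [abs_pow, ← pow_sub_one_mul (NeZero.ne d)]
  gcongr
  exact lp.norm_apply_le_norm one_ne_zero u i

/-- The coordinatewise `d`-th power on `ℓ¹`, where `d ≠ 0`. -/
def ellOnePow (u : ℓ¹(ι, ℝ)) : ℓ¹(ι, ℝ) :=
  ⟨fun i => u i ^ d, ((lp.memℓp u).norm.const_mul (‖u‖ ^ (d - 1))).mono (abs_pow_apply_le d u)⟩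

lemma norm_ellOnePow_le (u : ℓ¹(ι, ℝ)) : ‖ellOnePow d u‖ ≤ ‖u‖ ^ d := by
  rw [← pow_sub_one_mul (NeZero.ne d)]
  exact norm_le_mul_norm_of_forall_abs_le (abs_pow_apply_le d u) (by positivity)

lemma norm_ellOnePow_sub_le {u v : ℓ¹(ι, ℝ)} {r : ℝ} (hu : ‖u‖ ≤ r) (hv : ‖v‖ ≤ r) :
    ‖ellOnePow d u - ellOnePow d v‖ ≤ d * r ^ (d - 1) * ‖u - v‖ := by
  have hr : 0 ≤ r := (norm_nonneg u).trans hu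
  refine norm_le_mul_norm_of_forall_abs_le (fun i => ?_) (by positivity)
  have hmax : max |u i| |v i| ≤ r :=
    max_le ((lp.norm_apply_le_norm one_ne_zero u i).trans hu)
      ((lp.norm_apply_le_norm one_ne_zero v i).trans hv)
  calc |u i ^ d - v i ^ d| ≤ |u i - v i| * d * max |u i| |v i| ^ (d - 1) := abs_pow_sub_pow_le ..
    _ ≤ |u i - v i| * d * r ^ (d - 1) := by gcongr
    _ = d * r ^ (d - 1) * |u i - v i| := by ring

end Pow

variable (ι) in
/-- The nonnegative part of the closed ball of radius `ε` in `ℓ¹`. -/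
def nonnegBall (ε : ℝ) : Set ℓ¹(ι, ℝ) := {u | (∀ i, 0 ≤ u i) ∧ ‖u‖ ≤ ε}

lemma isClosed_nonnegBall (ε : ℝ) : IsClosed (nonnegBall ι ε) := by
  have hcoord (i : ι) : IsClosed {u : ℓ¹(ι, ℝ) | 0 ≤ u i} :=
    isClosed_le continuous_const (lp.lipschitzWith_one_eval 1 i).continuous
  simpa only [nonnegBall, Set.ofPred_and, Set.ofPred_forall] using
    (isClosed_iInter hcoord).inter (isClosed_le continuous_norm continuous_const)

lemma zero_mem_nonnegBall {ε : ℝ} (hε : 0 ≤ ε) : 0 ∈ nonnegBall ι ε :=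
  ⟨fun _ => le_rfl, by simpa using hε⟩

end EllOne

section BoundaryMap

variable {ι : Type*} {d : ℕ} [NeZero d] {K : ℓ¹(ι, ℝ) →L[ℝ] ℓ¹(ι, ℝ)} {β : ℓ¹(ι, ℝ) →L[ℝ] ℝ}
  {b : ℓ¹(ι, ℝ)} {c γ δ ε : ℝ}

variable (d K β b c) in
/-- The boundary law map in the coordinates `u i = λ(i) ^ (1 / d)` away from the origin, where
`λ(0) = 1`. The transfer operator is cut into blocks: `c` is its entry at the origin, `b` and `β`
are its column and row through the origin, and `K` is the remaining block. -/
def boundaryMap (u : ℓ¹(ι, ℝ)) : ℓ¹(ι, ℝ) :=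
  (c + β (ellOnePow d u))⁻¹ • (b + K (ellOnePow d u))

lemma one_le_add_apply_ellOnePow (hc : 1 ≤ c) (hβ₀ : ∀ v, (∀ i, 0 ≤ v i) → 0 ≤ β v)
    {u : ℓ¹(ι, ℝ)} (hu : ∀ i, 0 ≤ u i) : 1 ≤ c + β (ellOnePow d u) :=
  le_add_of_le_of_nonneg hc <| hβ₀ _ fun i => pow_nonneg (hu i) d

lemma norm_boundaryMap_le (hc : 1 ≤ c) (hβ₀ : ∀ v, (∀ i, 0 ≤ v i) → 0 ≤ β v)
    (hK : ‖K‖ ≤ γ) (hb : ‖b‖ ≤ δ) {u : ℓ¹(ι, ℝ)} (hu : u ∈ nonnegBall ι ε) :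
    ‖boundaryMap d K β b c u‖ ≤ δ + γ * ε ^ d := by
  have hden := one_le_add_apply_ellOnePow (d := d) hc hβ₀ hu.1
  have hpow : ‖ellOnePow d u‖ ≤ ε ^ d :=
    (norm_ellOnePow_le d u).trans (pow_le_pow_left₀ (norm_nonneg u) hu.2 d)
  calc ‖boundaryMap d K β b c u‖
      ≤ ‖b + K (ellOnePow d u)‖ := by
        rw [boundaryMap, norm_smul, Real.norm_of_nonneg (by positivity)]
        exact mul_le_of_le_one_left (norm_nonneg _) (inv_le_one_of_one_le₀ hden)
    _ ≤ ‖b‖ + ‖K (ellOnePow d u)‖ := norm_add_le _ _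
    _ ≤ δ + γ * ε ^ d := add_le_add hb (K.le_of_opNorm_le_of_le hK hpow)

lemma mapsTo_boundaryMap (hc : 1 ≤ c) (hβ₀ : ∀ v, (∀ i, 0 ≤ v i) → 0 ≤ β v)
    (hK₀ : ∀ v, (∀ i, 0 ≤ v i) → ∀ i, 0 ≤ K v i) (hb₀ : ∀ i, 0 ≤ b i)
    (hK : ‖K‖ ≤ γ) (hb : ‖b‖ ≤ δ) (hself : δ + γ * ε ^ d ≤ ε) :
    Set.MapsTo (boundaryMap d K β b c) (nonnegBall ι ε) (nonnegBall ι ε) := by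
  refine fun u hu => ⟨fun i => ?_, (norm_boundaryMap_le hc hβ₀ hK hb hu).trans hself⟩
  have hden := one_le_add_apply_ellOnePow (d := d) hc hβ₀ hu.1
  have hnum : 0 ≤ K (ellOnePow d u) i := hK₀ _ (fun j => pow_nonneg (hu.1 j) d) i
  exact mul_nonneg (by positivity) (add_nonneg (hb₀ i) hnum)

lemma boundaryMap_apply_pos (hc : 1 ≤ c) (hβ₀ : ∀ v, (∀ i, 0 ≤ v i) → 0 ≤ β v)
    (hK₀ : ∀ v, (∀ i, 0 ≤ v i) → ∀ i, 0 ≤ K v i) {u : ℓ¹(ι, ℝ)} (hu : ∀ i, 0 ≤ u i) {i : ι}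
    (hb : 0 < b i) : 0 < boundaryMap d K β b c u i := by
  have hden := one_le_add_apply_ellOnePow (d := d) hc hβ₀ hu
  have hnum : 0 ≤ K (ellOnePow d u) i := hK₀ _ (fun j => pow_nonneg (hu j) d) i
  exact mul_pos (by positivity) (add_pos_of_pos_of_nonneg hb hnum)

lemma norm_boundaryMap_sub_le (hc : 1 ≤ c) (hβ₀ : ∀ v, (∀ i, 0 ≤ v i) → 0 ≤ β v)
    (hK : ‖K‖ ≤ γ) (hβ : ‖β‖ ≤ δ) (hb : ‖b‖ ≤ δ) (hself : δ + γ * ε ^ d ≤ ε)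
    {u v : ℓ¹(ι, ℝ)} (hu : u ∈ nonnegBall ι ε) (hv : v ∈ nonnegBall ι ε) :
    ‖boundaryMap d K β b c u - boundaryMap d K β b c v‖
      ≤ (d * γ * ε ^ (d - 1) + d * δ * ε ^ d) * ‖u - v‖ := by
  have hdenu := one_le_add_apply_ellOnePow (d := d) hc hβ₀ hu.1
  have hdenv := one_le_add_apply_ellOnePow (d := d) hc hβ₀ hv.1
  have hpow := norm_ellOnePow_sub_le d hu.2 hv.2
  have hnum : ‖K (ellOnePow d u) - K (ellOnePow d v)‖
      ≤ γ * (d * ε ^ (d - 1) * ‖u - v‖) := by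
    rw [← map_sub]
    exact K.le_of_opNorm_le_of_le hK hpow
  have hden : |β (ellOnePow d u) - β (ellOnePow d v)|
      ≤ δ * (d * ε ^ (d - 1) * ‖u - v‖) := by
    rw [← map_sub]
    exact β.le_of_opNorm_le_of_le hβ hpow
  have hTv : ‖boundaryMap d K β b c v‖ ≤ ε :=
    (norm_boundaryMap_le hc hβ₀ hK hb hv).trans hself
  calc ‖boundaryMap d K β b c u - boundaryMap d K β b c v‖
      ≤ ‖K (ellOnePow d u) - K (ellOnePow d v)‖
          + |β (ellOnePow d u) - β (ellOnePow d v)| * ‖boundaryMap d K β b c v‖ := by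
        simpa only [boundaryMap, add_sub_add_left_eq_sub] using
          norm_inv_smul_sub_inv_smul_le hdenu (zero_lt_one.trans_le hdenv).ne'
            (b + K (ellOnePow d u)) (b + K (ellOnePow d v))
    _ ≤ γ * (d * ε ^ (d - 1) * ‖u - v‖) + δ * (d * ε ^ (d - 1) * ‖u - v‖) * ε :=
        add_le_add hnum (mul_le_mul hden hTv (norm_nonneg _) ((abs_nonneg _).trans hden))
    _ = (d * γ * ε ^ (d - 1) + d * δ * (ε ^ (d - 1) * ε)) * ‖u - v‖ := by ring
    _ = (d * γ * ε ^ (d - 1) + d * δ * ε ^ d) * ‖u - v‖ := by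
        rw [pow_sub_one_mul (NeZero.ne d)]

theorem exists_boundaryMap_eq (hc : 1 ≤ c) (hβ₀ : ∀ v, (∀ i, 0 ≤ v i) → 0 ≤ β v)
    (hK₀ : ∀ v, (∀ i, 0 ≤ v i) → ∀ i, 0 ≤ K v i) (hb₀ : ∀ i, 0 ≤ b i)
    (hK : ‖K‖ ≤ γ) (hβ : ‖β‖ ≤ δ) (hb : ‖b‖ ≤ δ) (hε : 0 ≤ ε) (hself : δ + γ * ε ^ d ≤ ε)
    (hcontr : d * γ * ε ^ (d - 1) + d * δ * ε ^ d < 1) :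
    ∃ u ∈ nonnegBall ι ε, boundaryMap d K β b c u = u :=
  exists_fixedPoint_of_dist_le_mul (isClosed_nonnegBall ε) ⟨0, zero_mem_nonnegBall hε⟩
    (mapsTo_boundaryMap hc hβ₀ hK₀ hb₀ hK hb hself) hcontr fun u hu v hv => by
      simpa only [dist_eq_norm] using norm_boundaryMap_sub_le hc hβ₀ hK hβ hb hself hu hv

end BoundaryMap

section ContractionSet

/-- The pairs `(γ, δ)` for which some radius `ε` makes the boundary law map a contractive self-map:
the good set without the constraints `1 < γ` and `0 < δ` and without the factor `2` in the
contraction condition. -/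
def contractionSet (d : ℕ) : Set (ℝ × ℝ) :=
  {p | ∃ ε > 0, p.2 + p.1 * ε ^ d ≤ ε ∧ d * p.1 * ε ^ (d - 1) + d * p.2 * ε ^ d < 1}

lemma goodSet_subset_contractionSet (d : ℕ) : goodSet d ⊆ contractionSet d := by
  rintro p ⟨-, -, ε, hε, hself, hcontr⟩
  exact ⟨ε, hε, hself, by linarith⟩

lemma mem_contractionSet_of_le {d : ℕ} {γ δ δ' : ℝ} (hδ : δ' ≤ δ)
    (h : (γ, δ) ∈ contractionSet d) : (γ, δ') ∈ contractionSet d := by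
  obtain ⟨ε, hε, hself, hcontr⟩ := h
  refine ⟨ε, hε, (add_le_add_left hδ _).trans hself, lt_of_le_of_lt ?_ hcontr⟩
  dsimp only
  gcongr

lemma lt_one_of_contraction {d : ℕ} [NeZero d] {γ δ ε : ℝ} (hγ : 1 ≤ γ) (hδ : 0 ≤ δ)
    (hcontr : d * γ * ε ^ (d - 1) + d * δ * ε ^ d < 1) : ε < 1 := by
  by_contra! hε₁
  have hd : (1 : ℝ) ≤ d := by exact_mod_cast NeZero.one_le
  have hone : 1 ≤ d * γ * ε ^ (d - 1) :=
    one_le_mul_of_one_le_of_one_le (one_le_mul_of_one_le_of_one_le hd hγ) (one_le_pow₀ hε₁)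
  have hnonneg : 0 ≤ d * δ * ε ^ d := by positivity
  linarith

end ContractionSet

lemma hasSum_of_hasSum_subtype_ne {α M : Type*} [AddCommMonoid M] [TopologicalSpace M]
    [ContinuousAdd M] {f : α → M} {s : M} (x : α) (h : HasSum (fun i : {i // i ≠ x} => f i) s) :
    HasSum f (f x + s) :=
  (hasSum_unique (f ∘ ((↑) : ({x} : Set α) → α))).add_compl h

lemma tsum_eq_add_tsum_subtype_ne {α : Type*} {f : α → ℝ} (hf : Summable f) (x : α) :
    ∑' i, f i = f x + ∑' i : {i // i ≠ x}, f i :=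
  (hasSum_of_hasSum_subtype_ne x (hf.subtype {i | i ≠ x}).hasSum).tsum_eq

section Group

variable {G : Type*} [AddCommGroup G] {a : G → ℝ} (ha : Summable a)

/-- The translate of `a` by `j`, restricted to the complement of the origin. -/
def puncturedTranslate (j : G) : ℓ¹({i : G // i ≠ 0}, ℝ) :=
  ⟨fun i => a (i - j),
    memℓp_one_of_summable (((Equiv.subRight j).summable_iff.2 ha).subtype {i | i ≠ 0})⟩

lemma puncturedTranslate_apply (j : G) (i : {i : G // i ≠ 0}) :
    puncturedTranslate ha j i = a (i - j) := rfl

lemma norm_puncturedTranslate_zero (ha₀ : ∀ i, 0 ≤ a i) :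
    ‖puncturedTranslate ha 0‖ = ∑' i : {i : G // i ≠ 0}, a i := by
  simp [norm_ellOne_eq_tsum, puncturedTranslate_apply, abs_of_nonneg (ha₀ _)]

lemma norm_puncturedTranslate_le (ha₀ : ∀ i, 0 ≤ a i) (j : G) :
    ‖puncturedTranslate ha j‖ ≤ ∑' i, a i := by
  calc ‖puncturedTranslate ha j‖ = ∑' i : {i : G // i ≠ 0}, a (i - j) := by
        simp [norm_ellOne_eq_tsum, puncturedTranslate_apply, abs_of_nonneg (ha₀ _)]
    _ ≤ ∑' i, a (i - j) :=
        Summable.tsum_subtype_le (fun i => a (i - j)) {i | i ≠ 0} (fun _ => ha₀ _)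
          ((Equiv.subRight j).summable_iff.2 ha)
    _ = ∑' i, a i := (Equiv.subRight j).tsum_eq a

open Classical in
/-- The extension of a function off the origin by the value `1` at the origin. -/
def extendOne (u : {i : G // i ≠ 0} → ℝ) (i : G) : ℝ := if h : i = 0 then 1 else u ⟨i, h⟩

lemma extendOne_zero (u : {i : G // i ≠ 0} → ℝ) : extendOne u 0 = 1 := dif_pos rfl

lemma extendOne_of_ne (u : {i : G // i ≠ 0} → ℝ) (i : {i : G // i ≠ 0}) :
    extendOne u i = u i := dif_neg i.2

lemma hasSum_mul_extendOne_pow {u : {i : G // i ≠ 0} → ℝ} {d : ℕ} {f : G → ℝ} {s : ℝ}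
    (h : HasSum (fun j : {j : G // j ≠ 0} => u j ^ d * f j) s) :
    HasSum (fun j => f j * extendOne u j ^ d) (f 0 + s) := by
  have hs := hasSum_of_hasSum_subtype_ne (f := fun j => f j * extendOne u j ^ d) 0
    (by simpa only [extendOne_of_ne, mul_comm] using h)
  simpa only [extendOne_zero, one_pow, mul_one] using hs

variable (ha₀ : ∀ i, 0 ≤ a i)

/-- Convolution with `a` on functions off the origin, restricted to the complement of the origin. -/
def puncturedConvolution : ℓ¹({i : G // i ≠ 0}, ℝ) →L[ℝ] ℓ¹({i : G // i ≠ 0}, ℝ) :=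
  ellOneLift (tsum_nonneg ha₀) fun j : {j : G // j ≠ 0} => norm_puncturedTranslate_le ha ha₀ j

lemma hasSum_puncturedConvolution_apply (v : ℓ¹({i : G // i ≠ 0}, ℝ)) (i : {i : G // i ≠ 0}) :
    HasSum (fun j : {j : G // j ≠ 0} => v j * a (i - j)) (puncturedConvolution ha ha₀ v i) :=
  (hasSum_ellOneLift (tsum_nonneg ha₀) _ v).mapL (lp.evalCLM ℝ (fun _ => ℝ) 1 i)

lemma puncturedConvolution_apply_nonneg (v : ℓ¹({i : G // i ≠ 0}, ℝ)) (hv : ∀ i, 0 ≤ v i)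
    (i : {i : G // i ≠ 0}) : 0 ≤ puncturedConvolution ha ha₀ v i :=
  (hasSum_puncturedConvolution_apply ha ha₀ v i).nonneg fun j => mul_nonneg (hv j) (ha₀ _)

lemma norm_puncturedConvolution_le : ‖puncturedConvolution ha ha₀‖ ≤ ∑' i, a i :=
  norm_ellOneLift_le _ _

/-- Summation against `a` of functions off the origin. -/
def puncturedPairing : ℓ¹({i : G // i ≠ 0}, ℝ) →L[ℝ] ℝ :=
  ellOneLift (w := fun j : {j : G // j ≠ 0} => a j) (norm_nonneg (puncturedTranslate ha 0))
    fun j => by simpa [puncturedTranslate_apply] using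
      lp.norm_apply_le_norm one_ne_zero (puncturedTranslate ha 0) j

lemma hasSum_puncturedPairing (v : ℓ¹({i : G // i ≠ 0}, ℝ)) :
    HasSum (fun j : {j : G // j ≠ 0} => v j * a j) (puncturedPairing ha v) :=
  hasSum_ellOneLift _ _ v

lemma puncturedPairing_nonneg (ha₀ : ∀ i, 0 ≤ a i) (v : ℓ¹({i : G // i ≠ 0}, ℝ))
    (hv : ∀ i, 0 ≤ v i) : 0 ≤ puncturedPairing ha v :=
  (hasSum_puncturedPairing ha v).nonneg fun j => mul_nonneg (hv j) (ha₀ _)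

lemma norm_puncturedPairing_le (ha₀ : ∀ i, 0 ≤ a i) :
    ‖puncturedPairing ha‖ ≤ ∑' i : {i : G // i ≠ 0}, a i :=
  (norm_ellOneLift_le _ _).trans_eq (norm_puncturedTranslate_zero ha ha₀)

variable {d : ℕ} [NeZero d]

lemma extendOne_eq_div_of_boundaryMap_eq (heven : ∀ i, a (-i) = a i)
    {u : ℓ¹({i : G // i ≠ 0}, ℝ)} (hden : a 0 + puncturedPairing ha (ellOnePow d u) ≠ 0)
    (hfix : boundaryMap d (puncturedConvolution ha ha₀) (puncturedPairing ha)
      (puncturedTranslate ha 0) (a 0) u = u) (i : G) :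
    extendOne u i = (∑' j, a (i - j) * extendOne u j ^ d) / ∑' j, a j * extendOne u j ^ d := by
  have htsum := (hasSum_mul_extendOne_pow (hasSum_puncturedPairing ha (ellOnePow d u))).tsum_eq
  by_cases hi : i = 0
  · simp only [hi, zero_sub, heven, extendOne_zero, htsum, div_self hden]
  · have hnum := (hasSum_mul_extendOne_pow (f := fun j => a (i - j))
      (hasSum_puncturedConvolution_apply ha ha₀ (ellOnePow d u) ⟨i, hi⟩)).tsum_eq
    calc extendOne u i = boundaryMap d (puncturedConvolution ha ha₀) (puncturedPairing ha)
            (puncturedTranslate ha 0) (a 0) u ⟨i, hi⟩ := by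
          rw [hfix, extendOne_of_ne u ⟨i, hi⟩]
      _ = _ := by
          rw [hnum, htsum, div_eq_inv_mul]
          rfl

end Group

/-- A normalised `d`-boundary law for the transfer operator `(i, j) ↦ a (i - j)`. Summability of
`lam` excludes solutions whose series diverge and thus take the junk value `0`. -/
structure IsBoundaryLaw {G : Type*} [AddCommGroup G] (a : G → ℝ) (d : ℕ) (lam : G → ℝ) : Prop where
  pos : ∀ i, 0 < lam i
  summable : Summable lam
  apply_zero : lam 0 = 1
  eq_pow : ∀ i, lam i = ((∑' j, a (i - j) * lam j) / ∑' j, a j * lam j) ^ d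

section ExistenceOfBoundaryLaws

variable {G : Type*} [AddCommGroup G] {a : G → ℝ} {d : ℕ}

lemma isBoundaryLaw_extendOne_pow [NeZero d] (hpos : ∀ i, 0 < a i) (heven : ∀ i, a (-i) = a i)
    (hzero : 1 ≤ a 0) (hsum : Summable a) {u : ℓ¹({i : G // i ≠ 0}, ℝ)} (hu : ∀ i, 0 ≤ u i)
    (hfix : boundaryMap d (puncturedConvolution hsum fun i => (hpos i).le) (puncturedPairing hsum)
      (puncturedTranslate hsum 0) (a 0) u = u) :
    IsBoundaryLaw a d fun i => extendOne u i ^ d := by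
  have hnonneg (i : G) : 0 ≤ a i := (hpos i).le
  have hpairing := puncturedPairing_nonneg hsum hnonneg
  have hden : 1 ≤ a 0 + puncturedPairing hsum (ellOnePow d u) :=
    one_le_add_apply_ellOnePow hzero hpairing hu
  have hx_pos (i : G) : 0 < extendOne u i := by
    by_cases hi : i = 0
    · rw [hi, extendOne_zero]
      exact one_pos
    · rw [extendOne_of_ne u ⟨i, hi⟩, ← hfix]
      exact boundaryMap_apply_pos hzero hpairing (puncturedConvolution_apply_nonneg hsum hnonneg)
        hu (hpos _)
  have hpow : Summable fun i => u i ^ d := (lp.memℓp (ellOnePow d u)).summable_of_one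
  refine ⟨fun i => pow_pos (hx_pos i) d, ?_, ?_, fun i => congrArg (· ^ d) ?_⟩
  · simpa using (hasSum_mul_extendOne_pow (f := 1) (by simpa using hpow.hasSum)).summable
  · rw [extendOne_zero, one_pow]
  · exact extendOne_eq_div_of_boundaryMap_eq hsum hnonneg heven (zero_lt_one.trans_le hden).ne'
      hfix i

theorem exists_isBoundaryLaw (hpos : ∀ i, 0 < a i) (heven : ∀ i, a (-i) = a i) (hzero : 1 ≤ a 0)
    (hsum : Summable a) (hd : d ≠ 0)
    (hmem : (∑' i, a i, ∑' i : {i : G // i ≠ 0}, a i) ∈ contractionSet d) :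
    ∃ lam, IsBoundaryLaw a d lam ∧ ∀ i ≠ 0, lam i < 1 := by
  have : NeZero d := ⟨hd⟩
  have hnonneg (i : G) : 0 ≤ a i := (hpos i).le
  obtain ⟨ε, hε, hself, hcontr⟩ := hmem
  obtain ⟨u, ⟨hu₀, hu_norm⟩, hfix⟩ := exists_boundaryMap_eq hzero
    (puncturedPairing_nonneg hsum hnonneg) (puncturedConvolution_apply_nonneg hsum hnonneg)
    (fun i => hnonneg (i - 0)) (norm_puncturedConvolution_le hsum hnonneg)
    (norm_puncturedPairing_le hsum hnonneg) (norm_puncturedTranslate_zero hsum hnonneg).le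
    hε.le hself hcontr
  have hε₁ : ε < 1 := lt_one_of_contraction
    (hzero.trans (hsum.le_tsum 0 fun i _ => hnonneg i)) (tsum_nonneg fun i => hnonneg _) hcontr
  refine ⟨_, isBoundaryLaw_extendOne_pow hpos heven hzero hsum hu₀ hfix, fun i hi => ?_⟩
  have hu_lt : u ⟨i, hi⟩ < 1 :=
    (((le_abs_self _).trans (lp.norm_apply_le_norm one_ne_zero u _)).trans hu_norm).trans_lt hε₁
  rw [extendOne_of_ne u ⟨i, hi⟩]
  exact pow_lt_one₀ (hu₀ _) hu_lt hd

end ExistenceOfBoundaryLaws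

section FiberSum

variable {H G : Type*}

/-- The sum of `Q` over the fibre of `π` at `i`; the fuzzy transfer operator is the case of the
projection from `ℤ` to `ZMod q`. -/
def fiberSum (π : H → G) (Q : H → ℝ) (i : G) : ℝ := ∑' h : {h // π h = i}, Q h

variable {Q : H → ℝ}

lemma fiberSum_pos {π : H → G} (hπ : Function.Surjective π) (hpos : ∀ h, 0 < Q h)
    (hsum : Summable Q) (i : G) : 0 < fiberSum π Q i := by
  obtain ⟨h, hh⟩ := hπ i
  exact (hsum.subtype _).tsum_pos (fun h => (hpos h).le) ⟨h, hh⟩ (hpos h)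

lemma le_fiberSum (π : H → G) (hnonneg : ∀ h, 0 ≤ Q h) (hsum : Summable Q) (h : H) :
    Q h ≤ fiberSum π Q (π h) :=
  (hsum.subtype {h' | π h' = π h}).le_tsum ⟨h, rfl⟩ fun h' _ => hnonneg h'.1

lemma hasSum_fiberSum (π : H → G) (hsum : Summable Q) : HasSum (fiberSum π Q) (∑' h, Q h) :=
  hsum.hasSum.tsum_fiberwise π

lemma fiberSum_neg [AddCommGroup H] [AddCommGroup G] (π : H →+ G) (heven : ∀ h, Q (-h) = Q h)
    (i : G) : fiberSum π Q (-i) = fiberSum π Q i := by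
  let e : {h // π h = i} ≃ {h // π h = -i} :=
    (Equiv.neg H).subtypeEquiv fun h => by simp
  exact (e.tsum_eq _).symm.trans (tsum_congr fun h => heven h)

lemma tsum_fiberSum_ne_zero_le [AddCommGroup H] [AddCommGroup G] (π : H →+ G)
    (hnonneg : ∀ h, 0 ≤ Q h) (hsum : Summable Q) :
    ∑' i : {i : G // i ≠ 0}, fiberSum π Q i ≤ ∑' h : {h : H // h ≠ 0}, Q h := by
  have hG := tsum_eq_add_tsum_subtype_ne (hasSum_fiberSum π hsum).summable 0
  have hH := tsum_eq_add_tsum_subtype_ne hsum 0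
  have hzero : Q 0 ≤ fiberSum π Q 0 := by simpa using le_fiberSum π hnonneg hsum 0
  linarith [(hasSum_fiberSum π hsum).tsum_eq]

end FiberSum

theorem stmt12_general {H G : Type*} [AddCommGroup H] [AddCommGroup G] {π : H →+ G}
    (hπ : Function.Surjective π) {d : ℕ} (hd : d ≠ 0) {Q : H → ℝ} (hpos : ∀ h, 0 < Q h)
    (heven : ∀ h, Q (-h) = Q h) (hzero : 1 ≤ Q 0) (hsum : Summable Q)
    (hmem : (∑' h, Q h, ∑' h : {h : H // h ≠ 0}, Q h) ∈ contractionSet d) :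
    ∃ lam, IsBoundaryLaw (fiberSum π Q) d lam ∧ ∀ i ≠ 0, lam i < 1 := by
  have hnonneg (h : H) : 0 ≤ Q h := (hpos h).le
  have hfib := hasSum_fiberSum π hsum
  refine exists_isBoundaryLaw (fiberSum_pos hπ hpos hsum) (fiberSum_neg π heven) ?_
    hfib.summable hd ?_
  · exact hzero.trans (by simpa using le_fiberSum π hnonneg hsum 0)
  · rw [hfib.tsum_eq]
    exact mem_contractionSet_of_le (tsum_fiberSum_ne_zero_le π hnonneg hsum) hmem

lemma normZ_one_of_nonneg {x : ℤ → ℝ} (hx : ∀ j, 0 ≤ x j) : normZ 1 x = ∑' j, x j := by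
  simp [normZ, abs_of_nonneg (hx _)]

lemma normZ0_one_of_nonneg {x : ℤ → ℝ} (hx : ∀ j, 0 ≤ x j) :
    normZ0 1 x = ∑' j : {j : ℤ // j ≠ 0}, x j := by
  simp [normZ0, abs_of_nonneg (hx _)]

/-- Theorem 3.1, part 1: existence of non-constant `q`-periodic boundary
law solutions for every period `q ≥ 2`, provided the pair of 1-norms of `Q` lies in `G_d`. -/
theorem stmt12 (d : ℕ) (hd : 2 ≤ d)
    (Q : ℤ → ℝ) (hQpos : ∀ j, 0 < Q j) (hQeven : ∀ j, Q (-j) = Q j)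
    (hQ0 : Q 0 = 1) (hQsum : Summable Q)
    (hgood : (normZ 1 Q, normZ0 1 Q) ∈ goodSet d) :
    ∀ q : ℕ, 2 ≤ q → ∃ lam : ZMod q → ℝ,
      (∀ i, 0 < lam i) ∧ lam 0 = 1 ∧ (∀ i : ZMod q, i ≠ 0 → lam i < 1) ∧
      ∀ i : ZMod q, lam i =
        ((∑' j : ZMod q, Qfuzzy q Q (i - j) * lam j) /
          (∑' j : ZMod q, Qfuzzy q Q j * lam j)) ^ d := by
  intro q _
  rw [normZ_one_of_nonneg fun j => (hQpos j).le, normZ0_one_of_nonneg fun j => (hQpos j).le]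
    at hgood
  obtain ⟨lam, hlam, hlt⟩ := stmt12_general (π := Int.castAddHom (ZMod q)) ZMod.intCast_surjective
    (by omega) hQpos hQeven hQ0.ge hQsum (goodSet_subset_contractionSet d hgood)
  exact ⟨lam, hlam.pos, hlam.apply_zero, hlt, hlam.eq_pow⟩
end
end

section
/- Convergence of fuzzy norms to the full norms (key step in the proof of Theorem 3.1, part 2): Fix an integer d ≥ 2. Let Q : ℤ → (0,∞) be even with Σ_{j∈ℤ} Q(j) < ∞, set Q̃(i) := sup_{|j| ≥ |i|} Q(j), and assume Σ_{i=1}^∞ (Σ_{j=1}^∞ Q̃(ij))^{(d+1)/2} < ∞. Then for every real p ≥ (d+1)/2, one has lim_{q→∞} ‖Q_q‖_{p,ℤ/qℤ} = ‖Q‖_{p,ℤ} and lim_{q→∞} ‖Q_q‖_{p,ℤ/qℤ∖{0̄}} = ‖Q‖_{p,ℤ∖{0}}. -/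
/-!
Let `Q` be summable and let `N_q` be the fuzzy operator of `|Q|`, so that `|Q_q| ≤ N_q ≤ ∑ |Q|`.
Spreading `|Q_q(i)|^p` over the residue class of `i` in proportion to `|Q|` turns `∑_i |Q_q(i)|^p`
into a sum over the fixed index set `ℤ`, with summands
`|Q(j)| * |Q_q(j mod q)|^p / N_q(j mod q)`. For `p ≥ 1` these are at most
`|Q(j)| * (∑ |Q|)^(p-1)`. Any two distinct integers are eventually incongruent mod `q`, so
`Q_q(j mod q) → Q(j)` and `N_q(j mod q) → |Q(j)|`, and the summands tend to `|Q(j)|^p`. Dominated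
convergence concludes, also when the sum runs over the nonzero residues only.
-/

open scoped BigOperators
open Filter Topology

noncomputable section

/-- `Q̃(i) := sup_{|j| ≥ |i|} Q(j)`. -/
noncomputable def Qtilde (Q : ℤ → ℝ) (i : ℤ) : ℝ :=
  ⨆ j : {j : ℤ // |i| ≤ |j|}, Q j.1

section FiberTsum

variable {α β E : Type*}

/-- The sum of `f` over the fibre of `π` at `b`. With `π` the reduction `ℤ → ℤ/qℤ` this is the
fuzzy transfer operator. -/
def fiberTsum [AddCommMonoid E] [TopologicalSpace E] (π : α → β) (f : α → E) (b : β) : E :=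
  ∑' a : π ⁻¹' {b}, f a

theorem fiberTsum_eq_tsum_indicator [AddCommMonoid E] [TopologicalSpace E] (π : α → β)
    (f : α → E) (b : β) : fiberTsum π f b = ∑' a, (π ⁻¹' {b}).indicator f a :=
  tsum_subtype (π ⁻¹' {b}) f

theorem tsum_fiberTsum_mul [NormedDivisionRing E] [CompleteSpace E] {π : α → β} {g : α → E}
    {c : β → E} (h : Summable fun a => g a * c (π a)) :
    ∑' b, fiberTsum π g b * c b = ∑' a, g a * c (π a) := by
  rw [← (h.hasSum.tsum_fiberwise π).tsum_eq]
  refine tsum_congr fun b => ?_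
  calc fiberTsum π g b * c b = ∑' a : π ⁻¹' {b}, g a * c b := tsum_mul_right.symm
    _ = ∑' a : π ⁻¹' {b}, g a * c (π a) :=
      tsum_congr fun a => congrArg (fun b' => g a * c b') (Eq.symm a.2)

variable [SeminormedAddCommGroup E] {f : α → E}

theorem norm_fiberTsum_le (hf : Summable fun a => ‖f a‖) (π : α → β) (b : β) :
    ‖fiberTsum π f b‖ ≤ fiberTsum π (fun a => ‖f a‖) b :=
  norm_tsum_le_tsum_norm (hf.subtype _)

theorem fiberTsum_norm_le_tsum (hf : Summable fun a => ‖f a‖) (π : α → β) (b : β) :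
    fiberTsum π (fun a => ‖f a‖) b ≤ ∑' a, ‖f a‖ :=
  hf.tsum_subtype_le _ _ fun _ => norm_nonneg _

theorem fiberTsum_norm_nonneg (π : α → β) (f : α → E) (b : β) :
    0 ≤ fiberTsum π (fun a => ‖f a‖) b :=
  tsum_nonneg fun _ => norm_nonneg _

/-- The function on `β` whose product with the fibre sums of `‖f‖` is the `p`-th power of the norm
of the fibre sums of `f`. Where the fibre sum of `‖f‖` vanishes, it is `0` by the convention
`x / 0 = 0`. -/
def fiberDensity (p : ℝ) (π : α → β) (f : α → E) (b : β) : ℝ :=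
  ‖fiberTsum π f b‖ ^ p / fiberTsum π (fun a => ‖f a‖) b

theorem fiberDensity_nonneg (p : ℝ) (π : α → β) (f : α → E) (b : β) :
    0 ≤ fiberDensity p π f b :=
  div_nonneg (by positivity) (fiberTsum_norm_nonneg π f b)

theorem fiberTsum_norm_mul_fiberDensity {p : ℝ} (hp : p ≠ 0) (hf : Summable fun a => ‖f a‖)
    (π : α → β) (b : β) :
    fiberTsum π (fun a => ‖f a‖) b * fiberDensity p π f b = ‖fiberTsum π f b‖ ^ p := by
  refine mul_div_cancel_of_imp' fun hN => ?_
  have hF : ‖fiberTsum π f b‖ = 0 :=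
    le_antisymm ((norm_fiberTsum_le hf π b).trans_eq hN) (norm_nonneg _)
  rw [hF, Real.zero_rpow hp]

theorem fiberDensity_le {p : ℝ} (hp : 1 ≤ p) (hf : Summable fun a => ‖f a‖) (π : α → β) (b : β) :
    fiberDensity p π f b ≤ (∑' a, ‖f a‖) ^ (p - 1) := by
  have hF := norm_fiberTsum_le hf π b
  refine div_le_of_le_mul₀ (fiberTsum_norm_nonneg π f b) (by positivity) ?_
  calc ‖fiberTsum π f b‖ ^ p = ‖fiberTsum π f b‖ ^ (p - 1) * ‖fiberTsum π f b‖ := by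
        rw [← Real.rpow_add_one' (norm_nonneg _) (by linarith), sub_add_cancel]
    _ ≤ (∑' a, ‖f a‖) ^ (p - 1) * fiberTsum π (fun a => ‖f a‖) b := by
        gcongr
        exact hF.trans (fiberTsum_norm_le_tsum hf π b)

theorem norm_mul_indicator_fiberDensity_le {p : ℝ} (hp : 1 ≤ p) (hf : Summable fun a => ‖f a‖)
    (π : α → β) (T : Set β) (a : α) :
    ‖‖f a‖ * T.indicator (fiberDensity p π f) (π a)‖ ≤ ‖f a‖ * (∑' a, ‖f a‖) ^ (p - 1) := by
  have hnonneg := fiberDensity_nonneg p π f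
  rw [norm_mul, norm_norm, Real.norm_of_nonneg (Set.indicator_nonneg (fun b _ => hnonneg b) _)]
  gcongr
  exact (Set.indicator_le_self' (fun b _ => hnonneg b) _).trans (fiberDensity_le hp hf π _)

theorem tsum_norm_fiberTsum_rpow {p : ℝ} (hp : 1 ≤ p) (hf : Summable fun a => ‖f a‖)
    (π : α → β) (T : Set β) :
    ∑' b : T, ‖fiberTsum π f b‖ ^ p =
      ∑' a, ‖f a‖ * T.indicator (fiberDensity p π f) (π a) := by
  have hsum : Summable fun a => ‖f a‖ * T.indicator (fiberDensity p π f) (π a) :=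
    .of_norm_bounded (hf.mul_right _) (norm_mul_indicator_fiberDensity_le hp hf π T)
  rw [← tsum_fiberTsum_mul hsum, tsum_subtype T fun b => ‖fiberTsum π f b‖ ^ p]
  refine tsum_congr fun b => ?_
  simp only [← Set.indicator_mul_right,
    fiberTsum_norm_mul_fiberDensity (zero_lt_one.trans_le hp).ne' hf]

end FiberTsum

section Limit

variable {ι α E : Type*} {β : ι → Type*} [NormedAddCommGroup E] [CompleteSpace E]
  {l : Filter ι} {π : ∀ i, α → β i} {f : α → E}

theorem tendsto_fiberTsum (hπ : ∀ a a', ∀ᶠ i in l, π i a = π i a' → a = a')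
    (hf : Summable fun a => ‖f a‖) (a : α) :
    Tendsto (fun i => fiberTsum (π i) f (π i a)) l (𝓝 (f a)) := by
  simp only [fiberTsum_eq_tsum_indicator]
  rw [← tsum_singleton a f, tsum_subtype]
  refine tendsto_tsum_of_dominated_convergence hf (fun k => tendsto_const_nhds.congr' ?_)
    (.of_forall fun i k => norm_indicator_le_norm_self f k)
  filter_upwards [hπ k a] with i hi
  have hmem : k ∈ ({a} : Set α) ↔ k ∈ π i ⁻¹' {π i a} := ⟨congrArg (π i), hi⟩
  by_cases hk : k ∈ ({a} : Set α)
  · rw [Set.indicator_of_mem hk, Set.indicator_of_mem (hmem.1 hk)]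
  · rw [Set.indicator_of_notMem hk, Set.indicator_of_notMem (mt hmem.2 hk)]

theorem tendsto_norm_mul_fiberDensity {p : ℝ} (hp : 0 < p)
    (hπ : ∀ a a', ∀ᶠ i in l, π i a = π i a' → a = a') (hf : Summable fun a => ‖f a‖) (a : α) :
    Tendsto (fun i => ‖f a‖ * fiberDensity p (π i) f (π i a)) l (𝓝 (‖f a‖ ^ p)) := by
  rcases eq_or_ne ‖f a‖ 0 with ha | ha
  · simpa only [ha, zero_mul, Real.zero_rpow hp.ne'] using tendsto_const_nhds
  · have hF : Tendsto (fun i => ‖fiberTsum (π i) f (π i a)‖ ^ p) l (𝓝 (‖f a‖ ^ p)) :=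
      (tendsto_fiberTsum hπ hf a).norm.rpow_const (.inr hp.le)
    have hN : Tendsto (fun i => fiberTsum (π i) (fun a => ‖f a‖) (π i a)) l (𝓝 ‖f a‖) :=
      tendsto_fiberTsum hπ hf.norm a
    have h := (hF.div hN ha).const_mul ‖f a‖
    rwa [mul_div_cancel₀ _ ha] at h

theorem tendsto_tsum_norm_fiberTsum_rpow {p : ℝ} (hp : 1 ≤ p)
    (hπ : ∀ a a', ∀ᶠ i in l, π i a = π i a' → a = a') {T : ∀ i, Set (β i)} {S : Set α}
    (hT : ∀ a, ∀ᶠ i in l, π i a ∈ T i ↔ a ∈ S) (hf : Summable fun a => ‖f a‖) :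
    Tendsto (fun i => ∑' b : T i, ‖fiberTsum (π i) f b‖ ^ p) l
      (𝓝 (∑' a : S, ‖f a‖ ^ p)) := by
  simp only [tsum_norm_fiberTsum_rpow hp hf]
  rw [tsum_subtype S fun a => ‖f a‖ ^ p]
  refine tendsto_tsum_of_dominated_convergence (hf.mul_right _) (fun a => ?_)
    (.of_forall fun i => norm_mul_indicator_fiberDensity_le hp hf (π i) (T i))
  by_cases ha : a ∈ S
  · rw [Set.indicator_of_mem ha]
    refine (tendsto_norm_mul_fiberDensity (by linarith) hπ hf a).congr' ?_
    filter_upwards [hT a] with i hi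
    rw [Set.indicator_of_mem (hi.2 ha)]
  · rw [Set.indicator_of_notMem ha]
    refine tendsto_const_nhds.congr' ?_
    filter_upwards [hT a] with i hi
    rw [Set.indicator_of_notMem (mt hi.1 ha), mul_zero]

end Limit

theorem eventually_intCast_zmod_eq_iff (j k : ℤ) :
    ∀ᶠ q : ℕ in atTop, (j : ZMod q) = k ↔ j = k := by
  filter_upwards [tendsto_natCast_atTop_atTop.eventually_gt_atTop |k - j|] with q hq
  refine ⟨fun h => ?_, congrArg _⟩
  have hdvd : (q : ℤ) ∣ k - j := (ZMod.intCast_eq_intCast_iff_dvd_sub j k q).1 h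
  exact (sub_eq_zero.1 (Int.eq_zero_of_abs_lt_dvd hdvd hq)).symm

theorem tendsto_tsum_abs_Qfuzzy_rpow {Q : ℤ → ℝ} (hQ : Summable Q) {p : ℝ} (hp : 1 ≤ p)
    {T : ∀ q, Set (ZMod q)} {S : Set ℤ} (hT : ∀ j : ℤ, ∀ᶠ q in atTop, (j : ZMod q) ∈ T q ↔ j ∈ S) :
    Tendsto (fun q : ℕ => ∑' i : T q, |Qfuzzy q Q i| ^ p) atTop (𝓝 (∑' j : S, |Q j| ^ p)) :=
  tendsto_tsum_norm_fiberTsum_rpow (π := fun q (j : ℤ) => (j : ZMod q)) hp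
    (fun j k => (eventually_intCast_zmod_eq_iff j k).mono fun _ => Iff.mp) hT hQ.norm

theorem stmt13_general {Q : ℤ → ℝ} (hQ : Summable Q) {p : ℝ} (hp : 1 ≤ p) :
    Tendsto (fun q : ℕ => normM q p (Qfuzzy q Q)) atTop (𝓝 (normZ p Q)) ∧
      Tendsto (fun q : ℕ => normM0 q p (Qfuzzy q Q)) atTop (𝓝 (normZ0 p Q)) := by
  have hfull : Tendsto (fun q : ℕ => ∑' i : ZMod q, |Qfuzzy q Q i| ^ p) atTop
      (𝓝 (∑' j, |Q j| ^ p)) := by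
    simpa only [tsum_univ (fun i : ZMod _ => |Qfuzzy _ Q i| ^ p), tsum_univ (fun j => |Q j| ^ p)]
      using tendsto_tsum_abs_Qfuzzy_rpow hQ hp (T := fun _ => Set.univ) (S := Set.univ)
        fun _ => .of_forall fun _ => Iff.rfl
  have hpunctured : Tendsto (fun q : ℕ => ∑' i : {i : ZMod q // i ≠ 0}, |Qfuzzy q Q i| ^ p) atTop
      (𝓝 (∑' j : {j : ℤ // j ≠ 0}, |Q j| ^ p)) :=
    tendsto_tsum_abs_Qfuzzy_rpow hQ hp (T := fun _ => {0}ᶜ) (S := {0}ᶜ) fun j => by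
      filter_upwards [eventually_intCast_zmod_eq_iff j 0] with q hq
      simpa using not_congr hq
  have hexp : 0 ≤ 1 / p := by positivity
  exact ⟨hfull.rpow_const (.inr hexp), hpunctured.rpow_const (.inr hexp)⟩

/-- key step in the proof of Theorem 3.1, part 2: convergence of the
fuzzy norms to the full norms as the period `q → ∞`, for every `p ≥ (d+1)/2`, under the
double-sum condition on `Q̃`. -/
theorem stmt13 (d : ℕ) (hd : 2 ≤ d)
    (Q : ℤ → ℝ) (hQpos : ∀ j, 0 < Q j) (hQeven : ∀ j, Q (-j) = Q j)
    (hQsum : Summable Q)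
    (hcond : Summable fun i : ℕ =>
      (∑' j : ℕ, Qtilde Q (((i : ℤ) + 1) * ((j : ℤ) + 1))) ^ (((d : ℝ) + 1) / 2)) :
    ∀ p : ℝ, ((d : ℝ) + 1) / 2 ≤ p →
      Tendsto (fun q : ℕ => normM q p (Qfuzzy q Q)) atTop (𝓝 (normZ p Q)) ∧
      Tendsto (fun q : ℕ => normM0 q p (Qfuzzy q Q)) atTop (𝓝 (normZ0 p Q)) := by
  have hd' : (2 : ℝ) ≤ d := by exact_mod_cast hd
  exact fun p hp => stmt13_general hQsum (by linarith)
end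
end

section
/- Delocalization of inhomogeneous random walks with non-degenerate steps (core of Theorem 3.3, delocalization part): Let q ≥ 1 be an integer and for each s ∈ ℤ/qℤ let ρ_s : ℤ → [0,1] be a probability mass function (Σ_{j∈ℤ} ρ_s(j) = 1) that is not a Dirac mass, i.e. ρ_s(j₀) < 1 for every j₀ ∈ ℤ. For n ≥ 1, a word s = (s_1, …, s_n) ∈ (ℤ/qℤ)^n and k ∈ ℤ, define the convolution mass (ρ_{s_1} * ⋯ * ρ_{s_n})(k) := Σ_{(x_1,…,x_n)∈ℤ^n, x_1+⋯+x_n = k} Π_{a=1}^n ρ_{s_a}(x_a). Then for every k ∈ ℤ, sup_{s ∈ (ℤ/qℤ)^n} (ρ_{s_1} * ⋯ * ρ_{s_n})(k) → 0 as n → ∞. (Applied with the step distributions ρ^Q_q(·|s̄) of increments conditional on the fuzzy chain, this shows that every gradient Gibbs measure built from a q-periodic boundary law delocalizes: the total increment W_n along a path of length n satisfies ν(W_n = k) → 0 for all k.) -/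
/-!
Fourier inversion on the circle `𝕋 = ℝ/ℤ`, the dual group of `ℤ`. The mass at `k` of a finite
measure on `ℤ` is the `k`-th Fourier coefficient of its characteristic function, and the
characteristic function of a sum of independent steps is a product. Hence the mass at `k` of
`ρ_{s_1} * ⋯ * ρ_{s_n}` is at most `∫_𝕋 ∏_a |φ_{s_a}| ≤ ∫_𝕋 gⁿ` with `g = max_s |φ_s|`, a bound that
depends neither on the word nor on `k`. At a point `θ` of infinite order the values `e^{2πijθ}`,
`j ∈ ℤ`, are distinct, so that by strict convexity of the disc `|φ_s(θ)| = 1` only if `ρ_s` is a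
Dirac mass. As the torsion points are countable, `g < 1` almost everywhere, and `∫_𝕋 gⁿ → 0` by
dominated convergence.
-/

open scoped BigOperators
open Filter Topology

noncomputable section

/-- The mass at `k` of the convolution `ρ_{s_1} * ⋯ * ρ_{s_n}` of the step distributions
along the word `s`: the sum over all `(x_1,…,x_n)` with `x_1 + ⋯ + x_n = k` of
`Π_a ρ_{s_a}(x_a)`. -/
noncomputable def wordConv (q : ℕ) (ρ : ZMod q → ℤ → ℝ) (n : ℕ)
    (s : Fin n → ZMod q) (k : ℤ) : ℝ :=
  ∑' x : {x : Fin n → ℤ // ∑ a, x a = k}, ∏ a, ρ (s a) (x.1 a)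

open MeasureTheory AddCircle

section MeasureTheory

variable {α : Type*} [MeasurableSpace α]

lemma exists_isProbabilityMeasure_real_singleton_eq [MeasurableSingletonClass α] {f : α → ℝ}
    (hf : ∀ a, 0 ≤ f a) (hsum : HasSum f 1) :
    ∃ μ : Measure α, IsProbabilityMeasure μ ∧ ∀ a, μ.real {a} = f a := by
  refine ⟨.sum fun a => ENNReal.ofReal (f a) • .dirac a, ⟨?_⟩, fun a => ?_⟩
  · simp [← ENNReal.ofReal_tsum_of_nonneg hf hsum.summable, hsum.tsum_eq]
  · rw [measureReal_def, Measure.sum_smul_dirac_singleton, ENNReal.toReal_ofReal (hf a)]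

lemma eq_dirac_of_ae_eq [MeasurableSingletonClass α] {μ : Measure α} [IsProbabilityMeasure μ]
    {a : α} (h : ∀ᵐ x ∂μ, x = a) : μ = .dirac a :=
  Measure.map_id.symm.trans (ProbabilityTheory.hasLaw_dirac_of_ae_eq h).map_eq

lemma hasSum_measureReal_singleton [MeasurableSingletonClass α] (μ : Measure α) [IsFiniteMeasure μ]
    {s : Set α} (hs : s.Countable) : HasSum (fun x : s => μ.real {(x : α)}) (μ.real s) := by
  have htsum : ∑' x : s, μ {(x : α)} = μ s :=
    tsum_measure_preimage_singleton (f := id) hs fun x _ => measurableSet_singleton x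
  have h := ENNReal.hasSum_toReal (htsum.trans_ne (measure_ne_top μ s))
  rwa [← ENNReal.tsum_toReal_eq fun x : s => measure_ne_top μ {(x : α)}, htsum] at h

lemma tsum_prod_measureReal_singleton {κ : Type*} [Fintype κ] {X : κ → Type*}
    [∀ a, MeasurableSpace (X a)] [∀ a, MeasurableSingletonClass (X a)] (μ : ∀ a, Measure (X a))
    [∀ a, IsFiniteMeasure (μ a)] {s : Set (∀ a, X a)} (hs : s.Countable) :
    ∑' x : s, ∏ a, (μ a).real {x.1 a} = (Measure.pi μ).real s := by
  rw [← (hasSum_measureReal_singleton (Measure.pi μ) hs).tsum_eq]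
  simp only [measureReal_def, Measure.pi_singleton, ENNReal.toReal_prod]

lemma tendsto_integral_pow_zero {A : Type*} [NormedRing A] [NormOneClass A] [NormedAlgebra ℝ A]
    {μ : Measure α} [IsFiniteMeasure μ] {f : α → A} (hf : AEStronglyMeasurable f μ)
    (hlt : ∀ᵐ x ∂μ, ‖f x‖ < 1) : Tendsto (fun n : ℕ => ∫ x, f x ^ n ∂μ) atTop (𝓝 0) := by
  rw [← integral_zero α A]
  refine tendsto_integral_of_dominated_convergence (fun _ => 1) (fun n => hf.pow n)
    (integrable_const 1) (fun n => ?_) ?_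
  · filter_upwards [hlt] with x hx
    exact (norm_pow_le _ n).trans (pow_le_one₀ (norm_nonneg _) hx.le)
  · filter_upwards [hlt] with x hx
    exact tendsto_pow_atTop_nhds_zero_of_norm_lt_one hx

end MeasureTheory

section Circle

lemma norm_fourier_apply {T : ℝ} (n : ℤ) (x : AddCircle T) : ‖fourier n x‖ = 1 :=
  Circle.norm_coe _

lemma fourier_sum {T : ℝ} {ι : Type*} (s : Finset ι) (n : ι → ℤ) (x : AddCircle T) :
    fourier (∑ i ∈ s, n i) x = ∏ i ∈ s, fourier (n i) x := by
  induction s using Finset.cons_induction with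
  | empty => simp
  | cons i s hi ih => rw [Finset.sum_cons, Finset.prod_cons, fourier_add, ih]

lemma fourier_apply_injective {T : ℝ} (hT : T ≠ 0) {x : AddCircle T} (hx : ¬IsOfFinAddOrder x) :
    Function.Injective fun n : ℤ => fourier n x := fun _ _ h =>
  (injective_zsmul_iff_not_isOfFinAddOrder.2 hx) (injective_toCircle hT (Subtype.ext h))

lemma countable_isOfFinAddOrder {𝕜 : Type*} [AddCommGroup 𝕜] [LinearOrder 𝕜]
    [IsOrderedAddMonoid 𝕜] (T : 𝕜) : {x : AddCircle T | IsOfFinAddOrder x}.Countable := by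
  have hunion : {x : AddCircle T | IsOfFinAddOrder x}
      = ⋃ n : ℕ, ⋃ _ : 0 < n, {x : AddCircle T | n • x = 0} := by
    ext x
    simp [isOfFinAddOrder_iff_nsmul_eq_zero]
  rw [hunion]
  exact Set.countable_iUnion fun n => Set.countable_iUnion fun hn =>
    (finite_torsion T hn).countable

instance nullSingletonClass_haarAddCircle {T : ℝ} [hT : Fact (0 < T)] :
    NullSingletonClass (haarAddCircle (T := T)) := by
  have : Nontrivial (Set.Ico 0 (0 + T)) := Set.nontrivial_coe_sort.2
    (Set.Ico_infinite ((lt_add_iff_pos_right 0).2 hT.out)).nontrivial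
  have : Nontrivial (AddCircle T) := (equivIco T 0).nontrivial
  infer_instance

lemma ae_not_isOfFinAddOrder {T : ℝ} [Fact (0 < T)] :
    ∀ᵐ x : AddCircle T ∂haarAddCircle, ¬IsOfFinAddOrder x :=
  (countable_isOfFinAddOrder T).ae_notMem haarAddCircle

end Circle

/-- The characteristic function `θ ↦ ∑_j μ{j} e^{2πijθ}` of a measure `μ` on `ℤ`, as a function on
`ℝ/ℤ`. The library's `charFun` is for measures on real inner product spaces. -/
def intCharFun (μ : Measure ℤ) (θ : UnitAddCircle) : ℂ :=
  ∫ j, fourier j θ ∂μ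

section intCharFun

variable (μ : Measure ℤ)

lemma continuous_intCharFun [IsFiniteMeasure μ] : Continuous (intCharFun μ) :=
  continuous_of_dominated (bound := fun _ => 1)
    (fun _ => (measurable_of_countable _).aestronglyMeasurable)
    (fun θ => .of_forall fun j => (norm_fourier_apply j θ).le) (integrable_const 1)
    (.of_forall fun j => (fourier j).continuous)

lemma norm_intCharFun_lt_one [IsProbabilityMeasure μ] (hμ : ∀ j, μ ≠ .dirac j) {θ : UnitAddCircle}
    (hθ : ¬IsOfFinAddOrder θ) : ‖intCharFun μ θ‖ < 1 := by
  have hle : ∀ᵐ j ∂μ, ‖fourier j θ‖ ≤ 1 := .of_forall fun j => (norm_fourier_apply j θ).le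
  rcases ae_eq_const_or_norm_integral_lt_of_norm_le_const hle with hconst | hlt
  · obtain ⟨j₀, hj₀⟩ := hconst.exists
    refine absurd (eq_dirac_of_ae_eq ?_) (hμ j₀)
    filter_upwards [hconst] with j hj
    exact fourier_apply_injective one_ne_zero hθ (hj.trans hj₀.symm)
  · rwa [probReal_univ, one_mul] at hlt

lemma fourierCoeff_intCharFun [IsFiniteMeasure μ] (k : ℤ) :
    fourierCoeff (intCharFun μ) k = μ.real {k} := by
  have hint : Integrable
      (fun p : UnitAddCircle × ℤ => fourier (-k) p.1 • fourier p.2 p.1) (haarAddCircle.prod μ) := by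
    have hmeas : Measurable fun p : UnitAddCircle × ℤ => fourier (-k) p.1 • fourier p.2 p.1 :=
      measurable_from_prod_countable_left fun j =>
        ((fourier (-k)).continuous.mul (fourier j).continuous).measurable
    refine .of_bound hmeas.aestronglyMeasurable 1 (.of_forall fun p => ?_)
    rw [norm_smul, norm_fourier_apply, norm_fourier_apply, one_mul]
  calc fourierCoeff (intCharFun μ) k
      = ∫ θ, ∫ j, fourier (-k) θ • fourier j θ ∂μ ∂haarAddCircle := by
        simp only [fourierCoeff, intCharFun, integral_smul]
    _ = ∫ j, fourierCoeff (T := 1) (fourier j) k ∂μ := integral_integral_swap hint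
    _ = ∫ j, Set.indicator {k} (fun _ => (1 : ℂ)) j ∂μ := by
        simp only [fourierCoeff_fourier, Pi.single_apply, Set.indicator_apply,
          Set.mem_singleton_iff, eq_comm (a := k)]
    _ = μ.real {k} := by
        rw [integral_indicator_const _ (measurableSet_singleton k), Complex.real_smul, mul_one]

lemma measureReal_singleton_le_integral_norm_intCharFun [IsFiniteMeasure μ] (k : ℤ) :
    μ.real {k} ≤ ∫ θ, ‖intCharFun μ θ‖ ∂haarAddCircle := by
  calc μ.real {k} = ‖fourierCoeff (intCharFun μ) k‖ := by
        rw [fourierCoeff_intCharFun, Complex.norm_of_nonneg measureReal_nonneg]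
    _ ≤ ∫ θ, ‖fourier (-k) θ • intCharFun μ θ‖ ∂haarAddCircle := norm_integral_le_integral_norm _
    _ = ∫ θ, ‖intCharFun μ θ‖ ∂haarAddCircle := by
        simp only [norm_smul, norm_fourier_apply, one_mul]

end intCharFun

section Sum

variable {ι κ : Type*} [Fintype κ]

lemma intCharFun_map_pi_sum (μ : κ → Measure ℤ) [∀ a, SigmaFinite (μ a)] (θ : UnitAddCircle) :
    intCharFun ((Measure.pi μ).map fun x => ∑ a, x a) θ = ∏ a, intCharFun (μ a) θ := by
  rw [intCharFun, integral_map (by fun_prop)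
    (measurable_of_countable _).aestronglyMeasurable]
  simp only [fourier_sum]
  exact integral_fintype_prod_eq_prod fun _ j => fourier j θ

lemma measureReal_pi_sum_eq_le_integral_prod (μ : κ → Measure ℤ) [∀ a, IsFiniteMeasure (μ a)]
    (k : ℤ) : (Measure.pi μ).real {x | ∑ a, x a = k}
      ≤ ∫ θ, ∏ a, ‖intCharFun (μ a) θ‖ ∂haarAddCircle := by
  have h := measureReal_singleton_le_integral_norm_intCharFun
    ((Measure.pi μ).map fun x => ∑ a, x a) k
  rw [map_measureReal_apply (by fun_prop) (measurableSet_singleton k)] at h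
  simp only [intCharFun_map_pi_sum, norm_prod] at h
  exact h

lemma measureReal_pi_sum_eq_le_integral_norm_pow [Fintype ι] (μ : ι → Measure ℤ)
    [∀ i, IsFiniteMeasure (μ i)] (s : κ → ι) (k : ℤ) :
    (Measure.pi fun a => μ (s a)).real {x | ∑ a, x a = k}
      ≤ ∫ θ, ‖fun i => intCharFun (μ i) θ‖ ^ Fintype.card κ ∂haarAddCircle := by
  have hcont := fun i => continuous_intCharFun (μ i)
  refine (measureReal_pi_sum_eq_le_integral_prod _ k).trans (integral_mono ?_ ?_ fun θ => ?_)
  · exact Continuous.integrable_of_hasCompactSupport (by fun_prop) (.of_compactSpace _)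
  · exact Continuous.integrable_of_hasCompactSupport (by fun_prop) (.of_compactSpace _)
  · exact (Finset.prod_le_prod (fun _ _ => norm_nonneg _) fun a _ =>
      norm_le_pi_norm (fun i => intCharFun (μ i) θ) (s a)).trans_eq (Finset.prod_const _)

end Sum

theorem tendstoUniformly_iSup_measureReal_pi_sum_eq {ι : Type*} [Finite ι] (μ : ι → Measure ℤ)
    [∀ i, IsProbabilityMeasure (μ i)] (hμ : ∀ i j, μ i ≠ .dirac j) :
    TendstoUniformly (fun n k => ⨆ s : Fin n → ι,
      (Measure.pi fun a => μ (s a)).real {x | ∑ a, x a = k}) 0 atTop := by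
  have := Fintype.ofFinite ι
  have hcont : Continuous fun θ => ‖fun i => intCharFun (μ i) θ‖ :=
    (continuous_pi fun i => continuous_intCharFun (μ i)).norm
  have hlt : ∀ᵐ θ ∂haarAddCircle, ‖‖fun i => intCharFun (μ i) θ‖‖ < 1 := by
    filter_upwards [ae_not_isOfFinAddOrder] with θ hθ
    rw [norm_norm, pi_norm_lt_iff one_pos]
    exact fun i => norm_intCharFun_lt_one (μ i) (hμ i) hθ
  have hlim := tendsto_integral_pow_zero hcont.aestronglyMeasurable hlt
  refine Metric.tendstoUniformly_iff.2 fun ε hε => ?_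
  filter_upwards [hlim.eventually_lt_const hε] with n hn k
  have hnonneg : 0 ≤ ⨆ s : Fin n → ι, (Measure.pi fun a => μ (s a)).real {x | ∑ a, x a = k} :=
    Real.iSup_nonneg fun _ => measureReal_nonneg
  rw [Pi.zero_apply, dist_zero_left, Real.norm_of_nonneg hnonneg]
  refine (Real.iSup_le (fun s => ?_) (integral_nonneg fun θ => by positivity)).trans_lt hn
  simpa only [Fintype.card_fin] using measureReal_pi_sum_eq_le_integral_norm_pow μ s k

theorem stmt15_general {ι : Type*} [Finite ι] (ρ : ι → ℤ → ℝ) (hnn : ∀ i j, 0 ≤ ρ i j)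
    (hsum : ∀ i, HasSum (ρ i) 1) (hnd : ∀ i j, ρ i j < 1) :
    TendstoUniformly (fun (n : ℕ) k => ⨆ s : Fin n → ι,
      ∑' x : {x : Fin n → ℤ // ∑ a, x a = k}, ∏ a, ρ (s a) (x.1 a)) 0 atTop := by
  choose μ hprob hμ using fun i => exists_isProbabilityMeasure_real_singleton_eq (hnn i) (hsum i)
  have hdirac : ∀ i j, μ i ≠ .dirac j := fun i j h =>
    (hnd i j).ne (by rw [← hμ, h]; simp [measureReal_def])
  have hmass : ∀ (n : ℕ) (s : Fin n → ι) (k : ℤ),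
      ∑' x : {x : Fin n → ℤ // ∑ a, x a = k}, ∏ a, ρ (s a) (x.1 a)
        = (Measure.pi fun a => μ (s a)).real {x | ∑ a, x a = k} := fun n s k => by
    simp only [← hμ]
    exact tsum_prod_measureReal_singleton _ (Set.to_countable {x : Fin n → ℤ | ∑ a, x a = k})
  simpa only [hmass] using tendstoUniformly_iSup_measureReal_pi_sum_eq μ hdirac

/-- core of Theorem 3.3, delocalization part: delocalization of
inhomogeneous random walks with non-degenerate steps. If each `ρ_s` is a probability mass
function on `ℤ` that is not a Dirac mass, then for every `k ∈ ℤ` the supremum over words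
`s ∈ (ℤ/qℤ)^n` of the convolution mass `(ρ_{s_1} * ⋯ * ρ_{s_n})(k)` tends to `0` as
`n → ∞`. -/
theorem stmt15 (q : ℕ) (hq : 1 ≤ q) (ρ : ZMod q → ℤ → ℝ)
    (hnn : ∀ s j, 0 ≤ ρ s j) (hle : ∀ s j, ρ s j ≤ 1)
    (hsum : ∀ s, HasSum (ρ s) 1)
    (hnd : ∀ (s : ZMod q) (j₀ : ℤ), ρ s j₀ < 1) :
    ∀ k : ℤ,
      Tendsto (fun n : ℕ => ⨆ s : Fin n → ZMod q, wordConv q ρ n s k)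
        atTop (𝓝 0) := by
  intro k
  have : NeZero q := ⟨Nat.one_le_iff_ne_zero.1 hq⟩
  exact (stmt15_general ρ hnn hsum hnd).tendsto_at k
end
end

section
/- Localization of the increment distribution along a path for localized Gibbs measures (second part of Theorem 3.3): Fix an integer d ≥ 2. Let Q : ℤ → (0,∞) be even, let λ : ℤ → (0,∞) satisfy Σ_{i∈ℤ} λ(i)^{(d+1)/d} < ∞, and suppose there is c > 0 such that Σ_{j∈ℤ} Q(i−j) λ(j) = c · λ(i)^{1/d} for every i ∈ ℤ. Define P(i,j) := Q(i−j) λ(j) / (Σ_{l∈ℤ} Q(i−l) λ(l)), the n-step kernels P^1 := P and P^{n+1}(i,j) := Σ_{l∈ℤ} P^n(i,l) P(l,j), and α(i) := λ(i)^{(d+1)/d} / Σ_{l∈ℤ} λ(l)^{(d+1)/d}. Then for every k ∈ ℤ, lim_{n→∞} Σ_{i∈ℤ} α(i) P^n(i, i+k) = Σ_{i∈ℤ} α(i) α(i+k) > 0. (The left-hand side equals ν(W_n = k), the probability under the gradient projection ν of the Gibbs measure associated to λ that the total increment along a path of length n equals k; hence ν is localized.) -/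
/-!
Let `P` be a strictly positive Markov kernel with stationary law `a`, and let `g` be bounded. The
energy `∑ a (Pⁿ g)²` decreases in `n`, and its decrement at each step is the `a`-average of the
variances of `Pⁿ g` under the laws `P x ·`. The decrements tend to `0` and all `a x * P x j` are
positive, so `Pⁿ g j - Pⁿ⁺¹ g x → 0` for all `x` and `j`. Averaging over `j` with respect to `a`,
which by stationarity preserves the mean of `Pⁿ g`, gives `Pⁿ g x → ∑ a g` by dominated
convergence. For `g` the indicator of `i + k` this reads `Pⁿ(i, i + k) → a (i + k)`, and a second
dominated convergence, in `i`, gives the limit of `∑ a i * Pⁿ(i, i + k)`.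

For the height chain, the boundary law equation makes `α i * P(i, j)` proportional to
`λ i * λ j * Q (i - j)`. Since `Q` is even this is symmetric, so `α` is reversible, hence
stationary.
-/

open scoped BigOperators
open Filter Topology

noncomputable section

/-- The transition kernel `P(i,j) = Q(i−j) λ(j) / Σ_l Q(i−l) λ(l)` of the height chain. -/
noncomputable def heightP (Q lam : ℤ → ℝ) (i j : ℤ) : ℝ :=
  Q (i - j) * lam j / ∑' l : ℤ, Q (i - l) * lam l

/-- The stationary vector `α(i) = λ(i)^{(d+1)/d} / Σ_l λ(l)^{(d+1)/d}`. -/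
noncomputable def heightAlpha (d : ℕ) (lam : ℤ → ℝ) (i : ℤ) : ℝ :=
  lam i ^ (((d : ℝ) + 1) / (d : ℝ)) / ∑' l : ℤ, lam l ^ (((d : ℝ) + 1) / (d : ℝ))

/-- The `n`-step kernels of a kernel `P` on `ℤ`: `P^0 = id`, `P^{n+1}(i,j) = Σ_l P^n(i,l) P(l,j)`
(so `P^1 = P`). -/
noncomputable def kernelPow (P : ℤ → ℤ → ℝ) : ℕ → ℤ → ℤ → ℝ
  | 0 => fun i j => if i = j then 1 else 0
  | n + 1 => fun i j => ∑' l : ℤ, kernelPow P n i l * P l j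

/-- `p` is a probability vector: the law of a random element of the discrete space `ι`. -/
structure IsProbVec {ι : Type*} (p : ι → ℝ) : Prop where
  nonneg : ∀ i, 0 ≤ p i
  hasSum_one : HasSum p 1

/-- `P` is a Markov (stochastic) kernel on the discrete space `ι`. -/
def IsMarkov {ι : Type*} (P : ι → ι → ℝ) : Prop :=
  ∀ i, IsProbVec (P i)

/-- The Markov operator `g ↦ P g` of the kernel `P`, meant for bounded `g`, for which the sum
converges. -/
def markovOp {ι : Type*} (P : ι → ι → ℝ) (g : ι → ℝ) (i : ι) : ℝ :=
  ∑' j, P i j * g j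

/-- The law `p P` after one step of the chain with kernel `P` started from the law `p`. -/
def pushLaw {ι : Type*} (P : ι → ι → ℝ) (p : ι → ℝ) (j : ι) : ℝ :=
  ∑' i, p i * P i j

/-- `a` is a stationary distribution of the kernel `P`. -/
structure IsStationaryLaw {ι : Type*} (P : ι → ι → ℝ) (a : ι → ℝ) : Prop extends IsProbVec a where
  pushLaw_eq : pushLaw P a = a

/-- The energy `‖g‖²` of `g` in `ℓ²(a)`, which the Markov operator decreases when `a` is
stationary. -/
def energy {ι : Type*} (a g : ι → ℝ) : ℝ :=
  ∑' i, a i * g i ^ 2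

/-- The variance of `g` under the law `P i` of one step of the chain from `i`. -/
def stepVariance {ι : Type*} (P : ι → ι → ℝ) (g : ι → ℝ) (i : ι) : ℝ :=
  ∑' j, P i j * (g j - markovOp P g i) ^ 2

section General

variable {ι : Type*} {P : ι → ι → ℝ} {p a g : ι → ℝ} {C : ℝ}

lemma norm_mul_le_mul_of_abs_le {w x : ℝ} (hw : 0 ≤ w) (hx : |x| ≤ C) : ‖w * x‖ ≤ w * C := by
  rw [Real.norm_eq_abs, abs_mul, abs_of_nonneg hw]
  exact mul_le_mul_of_nonneg_left hx hw

lemma abs_sq_le_sq_of_abs_le {x : ℝ} (hx : |x| ≤ C) : |x ^ 2| ≤ C ^ 2 := by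
  rw [abs_pow]
  exact pow_le_pow_left₀ (abs_nonneg x) hx 2

lemma abs_single_one_le [DecidableEq ι] (i j : ι) : |(Pi.single i 1 : ι → ℝ) j| ≤ 1 := by
  rw [Pi.single_apply]
  split_ifs <;> norm_num

lemma summable_mul_of_abs_le (hp : Summable p) (hg : ∀ i, |g i| ≤ C) :
    Summable fun i => p i * g i :=
  .of_norm_bounded (hp.abs.mul_right C) fun i => by
    rw [Real.norm_eq_abs, abs_mul]
    exact mul_le_mul_of_nonneg_left (hg i) (abs_nonneg _)

lemma isProbVec_div_tsum (hp : ∀ i, 0 ≤ p i) (hne : ∑' i, p i ≠ 0) :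
    IsProbVec fun i => p i / ∑' l, p l where
  nonneg i := div_nonneg (hp i) (tsum_nonneg hp)
  hasSum_one := by
    -- A divergent sum would have the value `0`.
    have hs : Summable p := by
      by_contra hns
      exact hne (tsum_eq_zero_of_not_summable hns)
    simpa only [div_self hne] using hs.hasSum.div_const (∑' l, p l)

namespace IsProbVec

lemma summable_mul (hp : IsProbVec p) (hg : ∀ i, |g i| ≤ C) : Summable fun i => p i * g i :=
  summable_mul_of_abs_le hp.hasSum_one.summable hg

lemma abs_tsum_mul_le (hp : IsProbVec p) (hg : ∀ i, |g i| ≤ C) : |∑' i, p i * g i| ≤ C := by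
  have hC : HasSum (fun i => p i * C) C := by simpa only [one_mul] using hp.hasSum_one.mul_right C
  exact tsum_of_norm_bounded hC fun i => norm_mul_le_mul_of_abs_le (hp.nonneg i) (hg i)

lemma hasSum_mul_sub_mean_sq (hp : IsProbVec p) (hg : ∀ i, |g i| ≤ C) :
    HasSum (fun i => p i * (g i - ∑' l, p l * g l) ^ 2)
      (∑' i, p i * g i ^ 2 - (∑' i, p i * g i) ^ 2) := by
  set m := ∑' l, p l * g l with hm
  have hsq := (hp.summable_mul fun i => abs_sq_le_sq_of_abs_le (hg i)).hasSum
  have hlin := (hp.summable_mul hg).hasSum.mul_left (2 * m)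
  have hval : ∑' i, p i * g i ^ 2 - m ^ 2 =
      ∑' i, p i * g i ^ 2 - 2 * m * ∑' i, p i * g i + m ^ 2 * 1 := by rw [← hm]; ring
  rw [hval]
  exact ((hsq.sub hlin).add (hp.hasSum_one.mul_left (m ^ 2))).congr_fun fun i => by ring

lemma hasSum_joint (hp : IsProbVec p) (hP : IsMarkov P) :
    HasSum (fun x : ι × ι => p x.1 * P x.1 x.2) 1 := by
  have hrow : ∀ i, HasSum (fun j => p i * P i j) (p i) := fun i => by
    simpa only [mul_one] using (hP i).hasSum_one.mul_left (p i)
  have hs : Summable fun x : ι × ι => p x.1 * P x.1 x.2 := by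
    refine (summable_prod_of_nonneg fun x => mul_nonneg (hp.nonneg _) ((hP _).nonneg _)).2
      ⟨fun i => (hrow i).summable, ?_⟩
    simpa only [(hrow _).tsum_eq] using hp.hasSum_one.summable
  have h := hs.hasSum.prod_fiberwise hrow
  rw [← h.unique hp.hasSum_one]
  exact hs.hasSum

lemma hasSum_pushLaw (hp : IsProbVec p) (hP : IsMarkov P) : HasSum (pushLaw P p) 1 := by
  have h : HasSum (fun x : ι × ι => p x.2 * P x.2 x.1) 1 :=
    (Equiv.prodComm ι ι).hasSum_iff.2 (hp.hasSum_joint hP)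
  exact h.prod_fiberwise fun j => (h.summable.prod_factor j).hasSum

protected lemma pushLaw (hp : IsProbVec p) (hP : IsMarkov P) : IsProbVec (pushLaw P p) where
  nonneg j := tsum_nonneg fun i => mul_nonneg (hp.nonneg i) ((hP i).nonneg j)
  hasSum_one := hp.hasSum_pushLaw hP

lemma tsum_pushLaw_mul (hp : IsProbVec p) (hP : IsMarkov P) (hg : ∀ i, |g i| ≤ C) :
    ∑' j, pushLaw P p j * g j = ∑' i, p i * markovOp P g i := by
  have hs : Summable (Function.uncurry fun i j => p i * P i j * g j) :=
    summable_mul_of_abs_le (g := fun x : ι × ι => g x.2) (hp.hasSum_joint hP).summable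
      fun x => hg x.2
  calc ∑' j, pushLaw P p j * g j = ∑' j, ∑' i, p i * P i j * g j := by
        simp only [pushLaw, tsum_mul_right]
    _ = ∑' i, ∑' j, p i * P i j * g j := hs.tsum_comm
    _ = ∑' i, p i * markovOp P g i := by simp only [markovOp, mul_assoc, tsum_mul_left]

end IsProbVec

namespace IsMarkov

lemma abs_markovOp_le (hP : IsMarkov P) (hg : ∀ i, |g i| ≤ C) (i : ι) : |markovOp P g i| ≤ C :=
  (hP i).abs_tsum_mul_le hg

lemma abs_iterate_markovOp_le (hP : IsMarkov P) (hg : ∀ i, |g i| ≤ C) (n : ℕ) :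
    ∀ i, |(markovOp P)^[n] g i| ≤ C := by
  induction n with
  | zero => exact hg
  | succ n ih => simpa only [Function.iterate_succ_apply'] using hP.abs_markovOp_le ih

lemma stepVariance_eq (hP : IsMarkov P) (hg : ∀ i, |g i| ≤ C) (i : ι) :
    stepVariance P g i = markovOp P (fun j => g j ^ 2) i - markovOp P g i ^ 2 :=
  ((hP i).hasSum_mul_sub_mean_sq hg).tsum_eq

lemma stepVariance_nonneg (hP : IsMarkov P) (i : ι) : 0 ≤ stepVariance P g i :=
  tsum_nonneg fun j => mul_nonneg ((hP i).nonneg j) (sq_nonneg _)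

lemma mul_sub_sq_le_stepVariance (hP : IsMarkov P) (hg : ∀ i, |g i| ≤ C) (i j : ι) :
    P i j * (g j - markovOp P g i) ^ 2 ≤ stepVariance P g i :=
  ((hP i).hasSum_mul_sub_mean_sq hg).summable.le_tsum j fun l _ =>
    mul_nonneg ((hP i).nonneg l) (sq_nonneg _)

lemma isStationaryLaw_of_detailedBalance (hP : IsMarkov P) (ha : IsProbVec a)
    (hrev : ∀ i j, a i * P i j = a j * P j i) : IsStationaryLaw P a where
  toIsProbVec := ha
  pushLaw_eq := by
    funext j
    simp only [pushLaw, hrev _ j, tsum_mul_left, (hP j).hasSum_one.tsum_eq, mul_one]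

end IsMarkov

namespace IsStationaryLaw

lemma pos (ha : IsStationaryLaw P a) (hP : IsMarkov P) (hpos : ∀ i j, 0 < P i j) (j : ι) :
    0 < a j := by
  obtain ⟨i, hi⟩ : ∃ i, a i ≠ 0 := by
    by_contra! h
    refine one_ne_zero (α := ℝ) ?_
    rw [← ha.hasSum_one.tsum_eq, tsum_congr h, tsum_zero]
  have hs : Summable fun i => a i * P i j :=
    ((ha.hasSum_joint hP).summable.prod_symm).prod_factor j
  calc 0 < a i * P i j := mul_pos ((ha.nonneg i).lt_of_ne' hi) (hpos i j)
    _ ≤ pushLaw P a j := hs.le_tsum i fun l _ => mul_nonneg (ha.nonneg l) (hpos l j).le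
    _ = a j := congrFun ha.pushLaw_eq j

lemma tsum_mul_markovOp (ha : IsStationaryLaw P a) (hP : IsMarkov P) (hg : ∀ i, |g i| ≤ C) :
    ∑' i, a i * markovOp P g i = ∑' i, a i * g i := by
  rw [← ha.tsum_pushLaw_mul hP hg, ha.pushLaw_eq]

lemma tsum_mul_iterate_markovOp (ha : IsStationaryLaw P a) (hP : IsMarkov P)
    (hg : ∀ i, |g i| ≤ C) (n : ℕ) :
    ∑' i, a i * (markovOp P)^[n] g i = ∑' i, a i * g i := by
  induction n with
  | zero => rfl
  | succ n ih =>
    simp only [Function.iterate_succ_apply']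
    rw [ha.tsum_mul_markovOp hP (hP.abs_iterate_markovOp_le hg n), ih]

lemma hasSum_mul_stepVariance (ha : IsStationaryLaw P a) (hP : IsMarkov P)
    (hg : ∀ i, |g i| ≤ C) :
    HasSum (fun i => a i * stepVariance P g i) (energy a g - energy a (markovOp P g)) := by
  have hg2 (i : ι) : |g i ^ 2| ≤ C ^ 2 := abs_sq_le_sq_of_abs_le (hg i)
  have hPg2 (i : ι) : |markovOp P g i ^ 2| ≤ C ^ 2 :=
    abs_sq_le_sq_of_abs_le (hP.abs_markovOp_le hg i)
  have hPsq := (ha.summable_mul (hP.abs_markovOp_le hg2)).hasSum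
  rw [ha.tsum_mul_markovOp hP hg2] at hPsq
  simp only [hP.stepVariance_eq hg, mul_sub]
  exact hPsq.sub (ha.summable_mul hPg2).hasSum

lemma mul_sub_sq_le_energy_sub (ha : IsStationaryLaw P a) (hP : IsMarkov P)
    (hg : ∀ i, |g i| ≤ C) (x j : ι) :
    a x * P x j * (g j - markovOp P g x) ^ 2 ≤ energy a g - energy a (markovOp P g) :=
  calc a x * P x j * (g j - markovOp P g x) ^ 2 ≤ a x * stepVariance P g x := by
        rw [mul_assoc]
        exact mul_le_mul_of_nonneg_left (hP.mul_sub_sq_le_stepVariance hg x j) (ha.nonneg x)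
    _ ≤ energy a g - energy a (markovOp P g) :=
        le_hasSum (ha.hasSum_mul_stepVariance hP hg) x fun i _ =>
          mul_nonneg (ha.nonneg i) (hP.stepVariance_nonneg i)

lemma energy_markovOp_le (ha : IsStationaryLaw P a) (hP : IsMarkov P) (hg : ∀ i, |g i| ≤ C) :
    energy a (markovOp P g) ≤ energy a g :=
  sub_nonneg.1 <| (ha.hasSum_mul_stepVariance hP hg).nonneg fun i =>
    mul_nonneg (ha.nonneg i) (hP.stepVariance_nonneg i)

lemma tendsto_energy_iterate_sub (ha : IsStationaryLaw P a) (hP : IsMarkov P)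
    (hg : ∀ i, |g i| ≤ C) :
    Tendsto (fun n => energy a ((markovOp P)^[n] g) - energy a ((markovOp P)^[n + 1] g))
      atTop (𝓝 0) := by
  have hanti : Antitone fun n => energy a ((markovOp P)^[n] g) :=
    antitone_nat_of_succ_le fun n => by
      rw [Function.iterate_succ_apply']
      exact ha.energy_markovOp_le hP (hP.abs_iterate_markovOp_le hg n)
  have hbdd : BddBelow (Set.range fun n => energy a ((markovOp P)^[n] g)) :=
    ⟨0, Set.forall_mem_range.2 fun n =>
      tsum_nonneg fun i => mul_nonneg (ha.nonneg i) (sq_nonneg _)⟩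
  have hlim := tendsto_atTop_ciInf hanti hbdd
  simpa only [sub_self] using hlim.sub ((tendsto_add_atTop_iff_nat 1).2 hlim)

lemma tendsto_iterate_sub (ha : IsStationaryLaw P a) (hP : IsMarkov P) (hg : ∀ i, |g i| ≤ C)
    {x j : ι} (hxj : 0 < a x * P x j) :
    Tendsto (fun n => (markovOp P)^[n] g j - (markovOp P)^[n + 1] g x) atTop (𝓝 0) := by
  have hdrop := (ha.tendsto_energy_iterate_sub hP hg).div_const (a x * P x j)
  rw [zero_div] at hdrop
  have hsq : Tendsto (fun n => ((markovOp P)^[n] g j - (markovOp P)^[n + 1] g x) ^ 2)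
      atTop (𝓝 0) := by
    refine squeeze_zero (fun n => sq_nonneg _) (fun n => ?_) hdrop
    rw [le_div_iff₀' hxj, Function.iterate_succ_apply']
    exact ha.mul_sub_sq_le_energy_sub hP (hP.abs_iterate_markovOp_le hg n) x j
  rw [tendsto_zero_iff_abs_tendsto_zero]
  simpa only [Function.comp_def, Real.sqrt_sq_eq_abs, Real.sqrt_zero] using hsq.sqrt

lemma tendsto_iterate_markovOp (ha : IsStationaryLaw P a) (hP : IsMarkov P)
    (hpos : ∀ i j, 0 < P i j) (hg : ∀ i, |g i| ≤ C) (x : ι) :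
    Tendsto (fun n => (markovOp P)^[n] g x) atTop (𝓝 (∑' i, a i * g i)) := by
  have hb := hP.abs_iterate_markovOp_le hg
  have hdiff : Tendsto
      (fun n => ∑' j, a j * ((markovOp P)^[n] g j - (markovOp P)^[n + 1] g x))
      atTop (𝓝 (∑' j, a j * 0)) := by
    refine tendsto_tsum_of_dominated_convergence (ha.hasSum_one.summable.mul_right (C + C))
      (fun j => (ha.tendsto_iterate_sub hP hg
        (mul_pos (ha.pos hP hpos x) (hpos x j))).const_mul (a j))
      (Eventually.of_forall fun n j => ?_)
    exact norm_mul_le_mul_of_abs_le (ha.nonneg j)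
      ((abs_sub _ _).trans (add_le_add (hb n j) (hb (n + 1) x)))
  have hmean : ∀ n, ∑' j, a j * ((markovOp P)^[n] g j - (markovOp P)^[n + 1] g x) =
      ∑' i, a i * g i - (markovOp P)^[n + 1] g x := fun n => by
    simp only [mul_sub]
    rw [(ha.summable_mul (hb n)).tsum_sub (ha.hasSum_one.summable.mul_right _), tsum_mul_right,
      ha.hasSum_one.tsum_eq, one_mul, ha.tsum_mul_iterate_markovOp hP hg]
  simp only [hmean, mul_zero, tsum_zero] at hdiff
  refine (tendsto_add_atTop_iff_nat 1).1 ?_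
  simpa only [sub_sub_cancel, sub_zero] using hdiff.const_sub (∑' i, a i * g i)

lemma tendsto_tsum_mul_iterate_markovOp (ha : IsStationaryLaw P a) (hP : IsMarkov P)
    (hpos : ∀ i j, 0 < P i j) {G : ι → ι → ℝ} (hG : ∀ i j, |G i j| ≤ C) :
    Tendsto (fun n => ∑' i, a i * (markovOp P)^[n] (G i) i) atTop
      (𝓝 (∑' i, a i * ∑' j, a j * G i j)) :=
  tendsto_tsum_of_dominated_convergence (ha.hasSum_one.summable.mul_right C)
    (fun i => (ha.tendsto_iterate_markovOp hP hpos (hG i) i).const_mul (a i))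
    (Eventually.of_forall fun n i =>
      norm_mul_le_mul_of_abs_le (ha.nonneg i) (hP.abs_iterate_markovOp_le (hG i) n i))

end IsStationaryLaw

end General

section Integers

variable {P : ℤ → ℤ → ℝ}

lemma isProbVec_kernelPow (hP : IsMarkov P) (n : ℕ) (i : ℤ) :
    IsProbVec (kernelPow P n i) := by
  induction n with
  | zero =>
    refine ⟨fun j => ?_, ?_⟩
    · simp only [kernelPow]
      positivity
    · simpa only [kernelPow, eq_comm] using hasSum_ite_eq i (1 : ℝ)
  | succ n ih => exact ih.pushLaw hP

lemma tsum_kernelPow_mul (hP : IsMarkov P) {g : ℤ → ℝ} {C : ℝ} (hg : ∀ j, |g j| ≤ C)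
    (n : ℕ) (i : ℤ) :
    ∑' j, kernelPow P n i j * g j = (markovOp P)^[n] g i := by
  induction n generalizing g with
  | zero => simp [kernelPow]
  | succ n ih =>
    calc ∑' j, kernelPow P (n + 1) i j * g j = ∑' l, kernelPow P n i l * markovOp P g l :=
          (isProbVec_kernelPow hP n i).tsum_pushLaw_mul hP hg
      _ = (markovOp P)^[n + 1] g i := ih (hP.abs_markovOp_le hg)

lemma kernelPow_eq_iterate_markovOp (hP : IsMarkov P) (n : ℕ) (i j : ℤ) :
    kernelPow P n i j = (markovOp P)^[n] (Pi.single j 1) i := by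
  rw [← tsum_kernelPow_mul hP (abs_single_one_le j) n i]
  simp [Pi.single_apply]

theorem stmt17_general {a : ℤ → ℝ} (hP : IsMarkov P) (hpos : ∀ i j, 0 < P i j)
    (ha : IsStationaryLaw P a) (e : ℤ → ℤ) :
    Tendsto (fun n : ℕ => ∑' i, a i * kernelPow P n i (e i)) atTop
        (𝓝 (∑' i, a i * a (e i))) ∧
      0 < ∑' i, a i * a (e i) := by
  have hapos := ha.pos hP hpos
  constructor
  · have hlim := ha.tendsto_tsum_mul_iterate_markovOp hP hpos fun i => abs_single_one_le (e i)
    simpa [kernelPow_eq_iterate_markovOp hP, Pi.single_apply] using hlim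
  · have hs : Summable fun i => a i * a (e i) := ha.summable_mul (C := 1) fun i => by
      rw [abs_of_pos (hapos _)]
      exact le_hasSum ha.hasSum_one (e i) fun j _ => ha.nonneg j
    exact hs.tsum_pos (fun i => (mul_pos (hapos _) (hapos _)).le) 0 (mul_pos (hapos _) (hapos _))

end Integers

section Height

variable {d : ℕ} {Q lam : ℤ → ℝ} {c : ℝ}

lemma isMarkov_heightP (hQ : ∀ j, 0 ≤ Q j) (hlam : ∀ i, 0 ≤ lam i)
    (hne : ∀ i, ∑' j, Q (i - j) * lam j ≠ 0) : IsMarkov (heightP Q lam) := fun i =>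
  isProbVec_div_tsum (fun j => mul_nonneg (hQ (i - j)) (hlam j)) (hne i)

lemma heightP_pos (hQ : ∀ j, 0 < Q j) (hlam : ∀ i, 0 < lam i)
    (hS : ∀ i, 0 < ∑' j, Q (i - j) * lam j) (i j : ℤ) : 0 < heightP Q lam i j :=
  div_pos (mul_pos (hQ (i - j)) (hlam j)) (hS i)

lemma isProbVec_heightAlpha (hlam : ∀ i, 0 < lam i)
    (hnorm : Summable fun i => lam i ^ (((d : ℝ) + 1) / (d : ℝ))) :
    IsProbVec (heightAlpha d lam) := by
  have hpow : ∀ i, 0 < lam i ^ (((d : ℝ) + 1) / (d : ℝ)) := fun i =>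
    Real.rpow_pos_of_pos (hlam i) _
  exact isProbVec_div_tsum (fun i => (hpow i).le)
    (hnorm.tsum_pos (fun i => (hpow i).le) 0 (hpow 0)).ne'

lemma heightAlpha_mul_heightP (hd : d ≠ 0) (hlam : ∀ i, 0 < lam i)
    (hbl : ∀ i, ∑' j, Q (i - j) * lam j = c * lam i ^ ((1 : ℝ) / (d : ℝ))) (i j : ℤ) :
    heightAlpha d lam i * heightP Q lam i j =
      lam i * lam j * Q (i - j) / (c * ∑' l, lam l ^ (((d : ℝ) + 1) / (d : ℝ))) := by
  have hsplit : lam i ^ (((d : ℝ) + 1) / (d : ℝ)) = lam i * lam i ^ ((1 : ℝ) / (d : ℝ)) := by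
    rw [add_div, div_self (Nat.cast_ne_zero.2 hd), Real.rpow_add (hlam i), Real.rpow_one]
  have hr : lam i ^ ((1 : ℝ) / (d : ℝ)) ≠ 0 := (Real.rpow_pos_of_pos (hlam i) _).ne'
  rw [heightAlpha, heightP, hbl, hsplit]
  field_simp

lemma isStationaryLaw_heightAlpha (hd : d ≠ 0) (hP : IsMarkov (heightP Q lam))
    (hQeven : ∀ j, Q (-j) = Q j) (hlam : ∀ i, 0 < lam i)
    (hnorm : Summable fun i => lam i ^ (((d : ℝ) + 1) / (d : ℝ)))
    (hbl : ∀ i, ∑' j, Q (i - j) * lam j = c * lam i ^ ((1 : ℝ) / (d : ℝ))) :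
    IsStationaryLaw (heightP Q lam) (heightAlpha d lam) :=
  hP.isStationaryLaw_of_detailedBalance (isProbVec_heightAlpha hlam hnorm) fun i j => by
    rw [heightAlpha_mul_heightP hd hlam hbl, heightAlpha_mul_heightP hd hlam hbl,
      ← hQeven (i - j), neg_sub, mul_comm (lam i)]

end Height

/-- second part of Theorem 3.3: localization of the increment
distribution along a path for localized Gibbs measures: for every `k`,
`ν(W_n = k) = Σ_i α(i) P^n(i, i+k) → Σ_i α(i) α(i+k) > 0` as `n → ∞`. -/
theorem stmt17 (d : ℕ) (hd : 2 ≤ d)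
    (Q : ℤ → ℝ) (hQpos : ∀ j, 0 < Q j) (hQeven : ∀ j, Q (-j) = Q j)
    (lam : ℤ → ℝ) (hlam : ∀ i, 0 < lam i)
    (hnorm : Summable fun i : ℤ => lam i ^ (((d : ℝ) + 1) / (d : ℝ)))
    (c : ℝ) (hc : 0 < c)
    (hbl : ∀ i : ℤ, ∑' j : ℤ, Q (i - j) * lam j = c * lam i ^ ((1 : ℝ) / (d : ℝ))) :
    ∀ k : ℤ,
      Tendsto
        (fun n : ℕ => ∑' i : ℤ, heightAlpha d lam i * kernelPow (heightP Q lam) n i (i + k))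
        atTop (𝓝 (∑' i : ℤ, heightAlpha d lam i * heightAlpha d lam (i + k))) ∧
      0 < ∑' i : ℤ, heightAlpha d lam i * heightAlpha d lam (i + k) := by
  have hS : ∀ i, 0 < ∑' j : ℤ, Q (i - j) * lam j := fun i =>
    hbl i ▸ mul_pos hc (Real.rpow_pos_of_pos (hlam i) _)
  have hP := isMarkov_heightP (fun j => (hQpos j).le) (fun i => (hlam i).le) fun i => (hS i).ne'
  exact fun k => stmt17_general hP (heightP_pos hQpos hlam hS)
    (isStationaryLaw_heightAlpha (by omega) hP hQeven hlam hnorm hbl) (· + k)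
end
end

section
/- Large-degree existence of localized states (analytic content of Theorem 4.2, part 1): Let U : ℤ^k → [0,∞) be even with U(0) = 0 and v := inf_{j∈ℤ^k∖{0}} U(j) > 0, and fix A > 1/v. For d ≥ 2 set β_{A,d} := A · log d / (d+1) and Q_β(j) := exp(−β U(j)). Assume ‖Q_{β_{A,d}}‖_{(d+1)/2, ℤ^k} < ∞ for some d ≥ 2 (equivalently, Σ_{j∈ℤ^k} d^{−A U(j)/2} < ∞ for some d ≥ 2). Then there exists d₀ ≥ 2 such that for every d ≥ d₀ and every β ≥ β_{A,d}, the pair (‖Q_β‖_{(d+1)/2, ℤ^k}, ‖Q_β‖_{d+1, ℤ^k∖{0}}) lies in the good set G_d; in particular, for each such d and β a family of distinct tree-automorphism invariant Gibbs measures (μ_i)_{i∈ℤ^k} exists. -/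
/-!
Write `Z(t) = ∑ j, exp (-t U(j))`, so that `γ ^ ((d + 1) / 2) = Z(β (d + 1) / 2)` and
`δ ^ (d + 1) = Z(β (d + 1)) - 1`. Comparing with a fixed `C` for which `Z(C)` is finite, `γ` is at
most `Z(C) ^ (2 / (d + 1)) → 1`, while the gap `U ≥ v` off the origin makes `δ ^ (d + 1)` at most
a constant times `exp (-v β (d + 1)) ≤ d ^ (-A v)`. Since `A v > 1`, `d δ ^ (d + 1) → 0`.

This decay is all that is needed: take the radius with `ε ^ (d - 1) = 1 / (7 d)`. The contraction
condition then follows from `γ ≤ 2` and `δ ≤ ε ≤ 1`, and the self-mapping condition becomes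
`δ ≤ ε (1 - 2 / (7 d))`, whose `(d + 1)`-st power only asks, by Bernoulli's inequality and
`ε ≥ 1 / 2`, that `d δ ^ (d + 1)` be small.
-/

open scoped BigOperators
open Filter Topology

noncomputable section

/-- The integer lattice `ℤ^k`. -/
abbrev ZkL (k : ℕ) := Fin k → ℤ

/-- The punctured integer lattice `ℤ^k ∖ {0}`, as a subtype. -/
abbrev ZkP (k : ℕ) := {j : ZkL k // j ≠ 0}

/-- The `p`-norm `‖x‖_{p, ℤ^k}` of a function on all of `ℤ^k`. -/
noncomputable def normFull (k : ℕ) (p : ℝ) (x : ZkL k → ℝ) : ℝ :=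
  (∑' j : ZkL k, |x j| ^ p) ^ (1 / p)

/-- The `p`-norm `‖x‖_{p, ℤ^k ∖ {0}}` of a function on `ℤ^k`, restricted to nonzero sites. -/
noncomputable def normPunct (k : ℕ) (p : ℝ) (x : ZkL k → ℝ) : ℝ :=
  (∑' j : ZkP k, |x j.1| ^ p) ^ (1 / p)

/-- The `p`-norm of a function defined on `ℤ^k ∖ {0}`. -/
noncomputable def norm0 (k : ℕ) (p : ℝ) (x : ZkP k → ℝ) : ℝ :=
  (∑' j : ZkP k, |x j| ^ p) ^ (1 / p)

/-- `γ := ‖Q‖_{(d+1)/2, ℤ^k}`. -/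
noncomputable def gam (k d : ℕ) (Q : ZkL k → ℝ) : ℝ := normFull k (((d : ℝ) + 1) / 2) Q

/-- `δ := ‖Q‖_{d+1, ℤ^k ∖ {0}}`. -/
noncomputable def del (k d : ℕ) (Q : ZkL k → ℝ) : ℝ := normPunct k ((d : ℝ) + 1) Q

/-- Membership in `D`: an element of `ℓ^{d+1}(ℤ^k ∖ {0})` with nonnegative entries. -/
def memD (k d : ℕ) (x : ZkP k → ℝ) : Prop :=
  Summable (fun j : ZkP k => |x j| ^ ((d : ℝ) + 1)) ∧ ∀ j : ZkP k, 0 ≤ x j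

/-- The operator `T`:
`T(x)(i) = (Q(i) + Σ_{j≠0} Q(i−j) x(j)^d) / (1 + Σ_{j≠0} Q(j) x(j)^d)`. -/
noncomputable def opT (k d : ℕ) (Q : ZkL k → ℝ) (x : ZkP k → ℝ) (i : ZkL k) : ℝ :=
  (Q i + ∑' j : ZkP k, Q (i - j.1) * x j ^ d) /
  (1 + ∑' j : ZkP k, Q j.1 * x j ^ d)

/-- The `p`-norm of a real function on an arbitrary index type, the common form of `normFull` and
`normPunct`. As there, it is only meaningful when `∑ j, |x j| ^ p` converges. -/
def pNorm {ι : Type*} (p : ℝ) (x : ι → ℝ) : ℝ :=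
  (∑' j, |x j| ^ p) ^ (1 / p)

section PNorm

variable {ι : Type*} {p : ℝ}

lemma pNorm_nonneg (x : ι → ℝ) : 0 ≤ pNorm p x :=
  Real.rpow_nonneg (tsum_nonneg fun _ => by positivity) _

lemma pNorm_rpow (hp : p ≠ 0) (x : ι → ℝ) : pNorm p x ^ p = ∑' j, |x j| ^ p := by
  rw [pNorm, one_div, Real.rpow_inv_rpow (tsum_nonneg fun _ => by positivity) hp]

lemma exp_neg_mul_rpow (β u p : ℝ) :
    Real.exp (-β * u) ^ p = Real.exp (-(β * p) * u) := by
  rw [← Real.exp_mul]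
  ring_nf

lemma pNorm_exp_neg_mul_rpow (hp : p ≠ 0) (β : ℝ) (U : ι → ℝ) :
    pNorm p (fun j => Real.exp (-β * U j)) ^ p = ∑' j, Real.exp (-(β * p) * U j) := by
  simp only [pNorm_rpow hp, Real.abs_exp, exp_neg_mul_rpow]

end PNorm

section PartitionFunction

variable {ι : Type*} {U : ι → ℝ} {C t v : ℝ}

lemma exp_neg_mul_le_of_le {u : ℝ} (hu : v ≤ u) (ht : C ≤ t) :
    Real.exp (-t * u) ≤ Real.exp (-(t - C) * v) * Real.exp (-C * u) := by
  rw [← Real.exp_add, Real.exp_le_exp]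
  linarith [mul_le_mul_of_nonneg_left hu (sub_nonneg.mpr ht)]

lemma summable_exp_neg_mul_of_le (hU : ∀ j, v ≤ U j)
    (hC : Summable fun j => Real.exp (-C * U j)) (ht : C ≤ t) :
    Summable fun j => Real.exp (-t * U j) :=
  .of_nonneg_of_le (fun _ => Real.exp_nonneg _) (fun j => exp_neg_mul_le_of_le (hU j) ht)
    (hC.mul_left _)

lemma tsum_exp_neg_mul_le_of_le (hU : ∀ j, v ≤ U j)
    (hC : Summable fun j => Real.exp (-C * U j)) (ht : C ≤ t) :
    ∑' j, Real.exp (-t * U j) ≤ Real.exp (-(t - C) * v) * ∑' j, Real.exp (-C * U j) := by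
  rw [← tsum_mul_left]
  exact (summable_exp_neg_mul_of_le hU hC ht).tsum_le_tsum
    (fun j => exp_neg_mul_le_of_le (hU j) ht) (hC.mul_left _)

lemma one_lt_tsum_exp_neg_mul [Nontrivial ι] {o : ι} (ho : U o = 0)
    (ht : Summable fun j => Real.exp (-t * U j)) :
    1 < ∑' j, Real.exp (-t * U j) := by
  classical
  obtain ⟨e, he⟩ := exists_ne o
  calc 1 < Real.exp (-t * U o) + Real.exp (-t * U e) := by simp [ho, Real.exp_pos]
    _ = ∑ j ∈ {o, e}, Real.exp (-t * U j) := by rw [Finset.sum_pair he.symm]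
    _ ≤ ∑' j, Real.exp (-t * U j) := ht.sum_le_tsum _ fun _ _ => Real.exp_nonneg _

end PartitionFunction

section BoltzmannNorm

variable {ι : Type*} {U : ι → ℝ} {o : ι} {p C v β : ℝ}

lemma pNorm_exp_mem_Ioc [Nontrivial ι] (hp : 0 < p) (ho : U o = 0) (hU : ∀ j, 0 ≤ U j)
    (hC : Summable fun j => Real.exp (-C * U j)) (hβ : C ≤ β * p)
    (hp_large : ∑' j, Real.exp (-C * U j) ≤ 2 ^ p) :
    pNorm p (fun j => Real.exp (-β * U j)) ∈ Set.Ioc 1 2 := by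
  have hpow := pNorm_exp_neg_mul_rpow hp.ne' β U
  constructor
  · rw [← Real.rpow_lt_rpow_iff zero_le_one (pNorm_nonneg _) hp, Real.one_rpow, hpow]
    exact one_lt_tsum_exp_neg_mul ho (summable_exp_neg_mul_of_le hU hC hβ)
  · rw [← Real.rpow_le_rpow_iff (pNorm_nonneg _) zero_le_two hp, hpow]
    refine le_trans ?_ hp_large
    simpa using tsum_exp_neg_mul_le_of_le hU hC hβ

lemma pNorm_exp_pos [Nonempty ι] (hp : p ≠ 0)
    (hs : Summable fun j => Real.exp (-(β * p) * U j)) :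
    0 < pNorm p (fun j => Real.exp (-β * U j)) := by
  refine (pNorm_nonneg _).lt_of_ne' fun h => ?_
  have hpow := pNorm_exp_neg_mul_rpow hp β U
  rw [h, Real.zero_rpow hp] at hpow
  exact (hs.tsum_pos (fun _ => Real.exp_nonneg _) (Classical.arbitrary ι)
    (Real.exp_pos _)).ne hpow

lemma pNorm_exp_pow_succ_le {d : ℕ} (hU : ∀ j, v ≤ U j)
    (hC : Summable fun j => Real.exp (-C * U j)) (hβ : C ≤ β * (d + 1)) :
    pNorm ((d : ℝ) + 1) (fun j => Real.exp (-β * U j)) ^ (d + 1) ≤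
      Real.exp (-(β * (d + 1) - C) * v) * ∑' j, Real.exp (-C * U j) := by
  rw [← Real.rpow_natCast, Nat.cast_succ, pNorm_exp_neg_mul_rpow (by positivity)]
  exact tsum_exp_neg_mul_le_of_le hU hC hβ

end BoltzmannNorm

section GoodSet

variable {d : ℕ} {γ δ ε : ℝ}

lemma seven_mul_le_two_pow_pred {n : ℕ} (hn : 7 ≤ n) : 7 * n ≤ 2 ^ (n - 1) := by
  induction n, hn using Nat.le_induction with
  | base => norm_num
  | succ n hn ih =>
    have hpow : 2 ^ (n + 1 - 1) = 2 * 2 ^ (n - 1) := by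
      rw [← pow_succ']
      congr 1
      omega
    omega

lemma exists_pow_pred_eq_one_div_seven_mul (hd : 7 ≤ d) :
    ∃ ε : ℝ, 1 / 2 ≤ ε ∧ ε ≤ 1 ∧ ε ^ (d - 1) = 1 / (7 * d) := by
  have hd' : d - 1 ≠ 0 := by omega
  have hd_cast : (7 : ℝ) ≤ d := by exact_mod_cast hd
  have hε : ((1 / (7 * d) : ℝ) ^ ((d - 1 : ℕ) : ℝ)⁻¹) ^ (d - 1) = 1 / (7 * d) :=
    Real.rpow_inv_natCast_pow (by positivity) hd'
  refine ⟨_, ?_, ?_, hε⟩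
  · rw [← pow_le_pow_iff_left₀ (by norm_num) (by positivity) hd', hε, one_div_pow]
    exact one_div_le_one_div_of_le (by positivity)
      (by exact_mod_cast seven_mul_le_two_pow_pred hd)
  · exact Real.rpow_le_one (by positivity) ((div_le_one (by positivity)).mpr (by linarith))
      (by positivity)

lemma le_mul_one_sub_of_pow_le {n : ℕ} {q : ℝ} (hn : n ≠ 0) (hε : 0 ≤ ε) (hq : q ≤ 1)
    (hδε : δ ^ n ≤ ε ^ n * (1 - n * q)) : δ ≤ ε * (1 - q) := by
  have bernoulli : 1 - n * q ≤ (1 - q) ^ n := by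
    simpa [← sub_eq_add_neg] using one_add_mul_le_pow (a := -q) (by linarith) n
  refine le_of_pow_le_pow_left₀ hn (mul_nonneg hε (sub_nonneg.mpr hq)) ?_
  rw [mul_pow]
  exact hδε.trans (mul_le_mul_of_nonneg_left bernoulli (pow_nonneg hε n))

lemma mem_goodSet_of_le_mul_one_sub (hd : d ≠ 0) (hγ : 1 < γ) (hγ_le : γ ≤ 2) (hδ : 0 < δ)
    (hε : 0 < ε) (hε_le : ε ≤ 1) (hδ_le : δ ≤ ε * (1 - 2 * ε ^ (d - 1)))
    (hdε : 6 * d * ε ^ (d - 1) < 1) : (γ, δ) ∈ goodSet d := by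
  have hpow : ε ^ d = ε ^ (d - 1) * ε := (pow_sub_one_mul hd ε).symm
  have hε_pow : 0 < ε ^ d := pow_pos hε d
  have hδε : δ * ε ≤ 1 := mul_le_one₀ (by linarith) hε.le hε_le
  refine ⟨hγ, hδ, ε, hε, ?_, ?_⟩
  · calc δ + γ * ε ^ d ≤ ε * (1 - 2 * ε ^ (d - 1)) + 2 * ε ^ d := by gcongr
      _ = ε := by rw [hpow]; ring
  · calc 2 * d * γ * ε ^ (d - 1) + 2 * d * δ * ε ^ d
        = 2 * d * ε ^ (d - 1) * (γ + δ * ε) := by rw [hpow]; ring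
      _ ≤ 2 * d * ε ^ (d - 1) * (2 + 1) := by gcongr
      _ < 1 := by linarith

theorem mem_goodSet_of_mul_pow_le (hd : 7 ≤ d) (hγ : 1 < γ) (hγ_le : γ ≤ 2) (hδ : 0 < δ)
    (hδ_le : 84 * d * δ ^ (d + 1) ≤ 1) : (γ, δ) ∈ goodSet d := by
  obtain ⟨ε, hε_ge, hε_le, hε⟩ := exists_pow_pred_eq_one_div_seven_mul hd
  have hd_cast : (7 : ℝ) ≤ d := by exact_mod_cast hd
  have hε_pow : 1 / (28 * d) ≤ ε ^ (d + 1) :=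
    calc (1 : ℝ) / (28 * d) = 1 / (7 * d) * (1 / 2) * (1 / 2) := by ring
      _ ≤ ε ^ (d - 1) * ε * ε := by rw [hε]; gcongr
      _ = ε ^ (d + 1) := by rw [pow_sub_one_mul (by omega), pow_succ]
  refine mem_goodSet_of_le_mul_one_sub (by omega) hγ hγ_le hδ (by linarith) hε_le ?_ ?_
  · rw [hε, mul_one_div]
    refine le_mul_one_sub_of_pow_le d.succ_ne_zero (by linarith)
      ((div_le_one (by positivity)).mpr (by linarith)) ?_
    calc δ ^ (d + 1) ≤ 1 / (28 * d) * (1 / 3) := by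
          rw [div_mul_div_comm, le_div_iff₀ (by positivity)]
          linarith
      _ ≤ ε ^ (d + 1) * (1 - (d + 1 : ℕ) * (2 / (7 * d))) := by
          gcongr
          rw [le_sub_comm, mul_div_assoc', div_le_iff₀ (by positivity)]
          push_cast
          linarith
  · rw [hε, mul_one_div, div_lt_one (by positivity)]
    linarith

end GoodSet

section LargeDegree

lemma eventually_le_two_rpow (M : ℝ) :
    ∀ᶠ d : ℕ in atTop, M ≤ 2 ^ (((d : ℝ) + 1) / 2) := by
  have hexponent : Tendsto (fun d : ℕ => ((d : ℝ) + 1) / 2) atTop atTop :=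
    (tendsto_natCast_atTop_atTop.atTop_add tendsto_const_nhds).atTop_div_const two_pos
  exact ((tendsto_rpow_atTop_of_base_gt_one 2 one_lt_two).comp hexponent).eventually_ge_atTop M

lemma tendsto_log_natCast_atTop : Tendsto (fun d : ℕ => Real.log d) atTop atTop :=
  Real.tendsto_log_atTop.comp tendsto_natCast_atTop_atTop

lemma tendsto_natCast_mul_exp_neg_log {A v : ℝ} (hAv : 1 < A * v) (C : ℝ) :
    Tendsto (fun d : ℕ => (d : ℝ) * Real.exp (-(A * Real.log d - C) * v)) atTop (𝓝 0) := by
  have hexp : Tendsto (fun d : ℕ => Real.exp (C * v + (1 - A * v) * Real.log d)) atTop (𝓝 0) :=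
    Real.tendsto_exp_atBot.comp <| tendsto_atBot_add_const_left _ _ <|
      tendsto_log_natCast_atTop.const_mul_atTop_of_neg (by linarith)
  refine hexp.congr' ?_
  filter_upwards [eventually_gt_atTop 0] with d hd
  nth_rw 2 [← Real.exp_log (Nat.cast_pos.mpr hd : (0 : ℝ) < d)]
  rw [← Real.exp_add]
  ring_nf

variable {ι : Type*} {U : ι → ℝ} {o : ι} {A C v β : ℝ} {d : ℕ}

lemma pNorm_exp_mem_goodSet [Nontrivial ι] (hd : 7 ≤ d) (ho : U o = 0) (hv : 0 ≤ v)
    (hU : ∀ j, j ≠ o → v ≤ U j) (hC : Summable fun j => Real.exp (-C * U j))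
    (hβ : C ≤ β * (d + 1)) (hβ_half : C ≤ β * ((d + 1) / 2))
    (hd_large : ∑' j, Real.exp (-C * U j) ≤ 2 ^ (((d : ℝ) + 1) / 2))
    (hdecay : 84 * (d * Real.exp (-(β * (d + 1) - C) * v)) *
      ∑' j : {j // j ≠ o}, Real.exp (-C * U j) ≤ 1) :
    (pNorm (((d : ℝ) + 1) / 2) (fun j => Real.exp (-β * U j)),
     pNorm ((d : ℝ) + 1) (fun j : {j // j ≠ o} => Real.exp (-β * U j))) ∈ goodSet d := by
  have : Nonempty {j // j ≠ o} := nonempty_subtype.mpr (exists_ne o)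
  have hU_nonneg : ∀ j, 0 ≤ U j := fun j => by
    obtain rfl | hj := eq_or_ne j o
    exacts [ho.ge, hv.trans (hU j hj)]
  have hU_punct : ∀ j : {j // j ≠ o}, v ≤ U j := fun j => hU j j.2
  have hC_punct : Summable fun j : {j // j ≠ o} => Real.exp (-C * U j) :=
    hC.comp_injective Subtype.val_injective
  obtain ⟨hγ, hγ_le⟩ := pNorm_exp_mem_Ioc (by positivity) ho hU_nonneg hC hβ_half hd_large
  refine mem_goodSet_of_mul_pow_le hd hγ hγ_le
    (pNorm_exp_pos (by positivity) (summable_exp_neg_mul_of_le hU_punct hC_punct hβ)) ?_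
  calc 84 * d * pNorm ((d : ℝ) + 1) (fun j : {j // j ≠ o} => Real.exp (-β * U j)) ^ (d + 1)
      ≤ 84 * d * (Real.exp (-(β * (d + 1) - C) * v) *
          ∑' j : {j // j ≠ o}, Real.exp (-C * U j)) := by
        gcongr
        exact pNorm_exp_pow_succ_le hU_punct hC_punct hβ
    _ ≤ 1 := by simpa only [mul_assoc] using hdecay

theorem stmt18_general [Nontrivial ι] (ho : U o = 0) (hU : ∀ j, j ≠ o → v ≤ U j) (hv : 0 < v)
    (hA : 1 / v < A) (hC : Summable fun j => Real.exp (-C * U j)) :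
    ∃ d₀ : ℕ, 2 ≤ d₀ ∧ ∀ d : ℕ, d₀ ≤ d → ∀ β : ℝ, A * Real.log d / ((d : ℝ) + 1) ≤ β →
      (pNorm (((d : ℝ) + 1) / 2) (fun j => Real.exp (-β * U j)),
       pNorm ((d : ℝ) + 1) (fun j : {j // j ≠ o} => Real.exp (-β * U j))) ∈ goodSet d := by
  have hA_pos : 0 < A := (one_div_pos.mpr hv).trans hA
  have hAv : 1 < A * v := (div_lt_iff₀ hv).mp hA
  have hdecay : Tendsto (fun d : ℕ => 84 * (d * Real.exp (-(A * Real.log d - C) * v)) *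
      ∑' j : {j // j ≠ o}, Real.exp (-C * U j)) atTop (𝓝 0) := by
    simpa using ((tendsto_natCast_mul_exp_neg_log hAv C).const_mul 84).mul_const
      (∑' j : {j // j ≠ o}, Real.exp (-C * U j))
  have hlog := tendsto_log_natCast_atTop.const_mul_atTop hA_pos
  refine (Filter.Eventually.and ?_ (eventually_ge_atTop 2)).exists_forall_of_atTop.imp
    fun d₀ h => ⟨(h d₀ le_rfl).2, fun d hd => (h d hd).1⟩
  filter_upwards [eventually_ge_atTop 7, hlog.eventually_ge_atTop C,
    hlog.eventually_ge_atTop (2 * C), eventually_le_two_rpow (∑' j, Real.exp (-C * U j)),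
    hdecay.eventually_le_const one_pos] with d hd hCd hCd_half hM hdecay_d β hβ
  rw [div_le_iff₀ (by positivity)] at hβ
  refine pNorm_exp_mem_goodSet hd ho hv.le hU hC (hCd.trans hβ) (by linarith) hM
    (le_trans ?_ hdecay_d)
  gcongr

end LargeDegree

/-- analytic content of Theorem 4.2, part 1: large-degree existence of
localized states. With `v := inf_{j≠0} U(j) > 0`, `A > 1/v`, `β_{A,d} := A log d/(d+1)`,
and `Q_β := exp(−βU)` with finite `(d+1)/2`-norm for some `d ≥ 2`, there is `d₀ ≥ 2` such
that for all `d ≥ d₀` and all `β ≥ β_{A,d}` the pair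
`(‖Q_β‖_{(d+1)/2,ℤ^k}, ‖Q_β‖_{d+1,ℤ^k∖{0}})` lies in `G_d` (and hence a family of distinct
tree-automorphism invariant Gibbs measures `(μ_i)` exists). -/
theorem stmt18 (k : ℕ) (hk : 1 ≤ k)
    (U : ZkL k → ℝ) (hUnn : ∀ j, 0 ≤ U j) (hUeven : ∀ j, U (-j) = U j) (hU0 : U 0 = 0)
    (v : ℝ) (hv : IsGLB {y : ℝ | ∃ j : ZkL k, j ≠ 0 ∧ y = U j} v) (hvpos : 0 < v)
    (A : ℝ) (hA : 1 / v < A)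
    (hfin : ∃ d : ℕ, 2 ≤ d ∧ Summable fun j : ZkL k =>
      Real.exp (-(A * Real.log d / ((d : ℝ) + 1)) * U j) ^ (((d : ℝ) + 1) / 2)) :
    ∃ d₀ : ℕ, 2 ≤ d₀ ∧ ∀ d : ℕ, d₀ ≤ d →
      ∀ β : ℝ, A * Real.log d / ((d : ℝ) + 1) ≤ β →
        (gam k d (fun j => Real.exp (-β * U j)),
         del k d (fun j => Real.exp (-β * U j))) ∈ goodSet d := by
  have : Nonempty (Fin k) := ⟨⟨0, hk⟩⟩
  obtain ⟨_, -, hsum⟩ := hfin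
  simp only [exp_neg_mul_rpow] at hsum
  exact stmt18_general hU0 (fun j hj => hv.1 ⟨j, hj, rfl⟩) hvpos hA hsum
end
end
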